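/- arXiv:2102.08508 — 2 statements merged into one kernel-verified Lean document; each statement's English description precedes it below -/
import Mathlib

section
/- For all integers n ≥ 3, d ≥ 0, and 2 ≤ j ≤ n−1, one has b_{n,d}(1,j) + b_{n,d}(j,1) = 2·p_{n,d}(1,j). -/
/-- The word `π₁π₂⋯πₙ` of a permutation of `[n] = {1, …, n}`. -/
def permWord (n : ℕ) (π : Equiv.Perm (Fin n)) : ℕ → ℕ :=
  fun i => if h : i < n then (π ⟨i, h⟩ : ℕ) + 1 else 0

/-- The number of descents of a permutation of `[n]`. -/
def desNum (n : ℕ) (π : Equiv.Perm (Fin n)) : ℕ :=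
  ((Finset.range (n - 1)).filter (fun i => permWord n π (i + 1) < permWord n π i)).card

/-- Ballot permutation: every prefix has at least as many ascents as descents. -/
def IsBallot (n : ℕ) (π : Equiv.Perm (Fin n)) : Prop :=
  ∀ i ≤ n,
    ((Finset.range (i - 1)).filter (fun k => permWord n π (k + 1) < permWord n π k)).card ≤
      ((Finset.range (i - 1)).filter (fun k => permWord n π k < permWord n π (k + 1))).card

/-- `π` has the three-letter word `a b c` as a factor: the letters `a, b, c`
occur consecutively (in this order) in the word of `π`. -/
def HasFactor (n : ℕ) (π : Equiv.Perm (Fin n)) (a b c : ℕ) : Prop :=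
  ∃ k, k + 2 < n ∧ permWord n π k = a ∧ permWord n π (k + 1) = b ∧ permWord n π (k + 2) = c

/-- Cyclic descent number of a cycle: the number of points `x` with `c x < x`. -/
def cdes {n : ℕ} (c : Equiv.Perm (Fin n)) : ℕ :=
  (Finset.univ.filter (fun x : Fin n => c x < x)).card

/-- Cyclic ascent number of a cycle: the number of points `x` with `x < c x`. -/
def casc {n : ℕ} (c : Equiv.Perm (Fin n)) : ℕ :=
  (Finset.univ.filter (fun x : Fin n => x < c x)).card

/-- `M(π) = Σ_c min(cdes c, casc c)` over all cycles `c` of `π`. -/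
def Mstat {n : ℕ} (π : Equiv.Perm (Fin n)) : ℕ :=
  ∑ c ∈ π.cycleFactorsFinset, min (cdes c) (casc c)

/-- `π` has the three-letter word `a b c` (with distinct letters) as a cyclic factor:
`a, b, c` occur consecutively in (a word representing) some cycle of `π`, i.e.
`π` maps the element labelled `a` to the one labelled `b` and that one to `c`. -/
def HasCyclicFactor (n : ℕ) (π : Equiv.Perm (Fin n)) (a b c : ℕ) : Prop :=
  ∃ x y z : Fin n, (x : ℕ) + 1 = a ∧ (y : ℕ) + 1 = b ∧ (z : ℕ) + 1 = c ∧ π x = y ∧ π y = z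

/-- `b_{n,d}(i,j)`: the number of ballot permutations of length `n` with `d` descents
having `i n j` as a factor. -/
noncomputable def ballotFactorCount (n d i j : ℕ) : ℕ :=
  Nat.card {π : Equiv.Perm (Fin n) //
    IsBallot n π ∧ desNum n π = d ∧ HasFactor n π i n j}

/-- `p_{n,d}(i,j)`: the number of odd order permutations `π` of length `n` with
`M(π) = d` having `i n j` as a cyclic factor. -/
noncomputable def oddOrderCyclicCount (n d i j : ℕ) : ℕ :=
  Nat.card {π : Equiv.Perm (Fin n) //
    (∀ m ∈ π.cycleType, Odd m) ∧ Mstat π = d ∧ HasCyclicFactor n π i n j}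

set_option linter.unusedSectionVars false
namespace BF
open Finset

/-- set functions with disjoint convolution -/
def SF (α : Type*) (K : Type*) := Finset α → K

section ring
variable {α : Type*} [DecidableEq α] {K : Type*} [CommRing K]

instance : AddCommGroup (SF α K) := inferInstanceAs (AddCommGroup (Finset α → K))

instance : Mul (SF α K) := ⟨fun F G S => ∑ T ∈ S.powerset, F T * G (S \ T)⟩
instance : One (SF α K) := ⟨fun S => if S = ∅ then 1 else 0⟩

theorem mul_ap (F G : SF α K) (S : Finset α) :
    (F * G) S = ∑ T ∈ S.powerset, F T * G (S \ T) := rfl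
theorem one_ap (S : Finset α) : (1 : SF α K) S = if S = ∅ then 1 else 0 := rfl
theorem add_ap (F G : SF α K) (S : Finset α) : (F + G) S = F S + G S := rfl
theorem sub_ap (F G : SF α K) (S : Finset α) : (F - G) S = F S - G S := rfl
theorem neg_ap (F : SF α K) (S : Finset α) : (-F) S = - F S := rfl
theorem zero_ap (S : Finset α) : (0 : SF α K) S = 0 := rfl

theorem sf_mul_comm (F G : SF α K) : F * G = G * F := by
  funext S
  rw [mul_ap, mul_ap]
  refine Finset.sum_nbij' (fun T => S \ T) (fun T => S \ T) ?_ ?_ ?_ ?_ ?_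
  · intro T hT; simp
  · intro T hT; simp
  · intro T hT; simp at hT ⊢; exact hT
  · intro T hT; simp at hT ⊢; exact hT
  · intro T hT
    simp at hT
    rw [Finset.sdiff_sdiff_eq_self hT, mul_comm]

theorem sf_mul_assoc (F G H : SF α K) : F * G * H = F * (G * H) := by
  funext S
  rw [mul_ap, mul_ap]
  simp only [mul_ap, Finset.sum_mul, Finset.mul_sum]
  rw [Finset.sum_sigma', Finset.sum_sigma']
  refine Finset.sum_nbij' (fun p => ⟨p.2, p.1 \ p.2⟩) (fun p => ⟨p.1 ∪ p.2, p.1⟩) ?_ ?_ ?_ ?_ ?_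
  · rintro ⟨T, U⟩ h
    simp only [mem_sigma, mem_powerset] at h ⊢
    exact ⟨h.2.trans h.1, sdiff_subset_sdiff h.1 le_rfl⟩
  · rintro ⟨T, U⟩ h
    simp only [mem_sigma, mem_powerset] at h ⊢
    exact ⟨union_subset h.1 (h.2.trans sdiff_subset), subset_union_left⟩
  · rintro ⟨T, U⟩ h
    simp only [mem_sigma, mem_powerset] at h ⊢
    simp only [union_sdiff_of_subset h.2]
  · rintro ⟨T, U⟩ h
    simp only [mem_sigma, mem_powerset] at h ⊢
    have : Disjoint T U := (disjoint_sdiff.mono_right h.2)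
    rw [union_sdiff_cancel_left this]
  · rintro ⟨T, U⟩ h
    simp only [mem_sigma, mem_powerset] at h ⊢
    have : (S \ U) \ (T \ U) = S \ T := by
      ext z; simp only [mem_sdiff]
      have := @h.2 z
      tauto
    rw [this, mul_assoc]

theorem sf_one_mul (F : SF α K) : 1 * F = F := by
  funext S
  rw [mul_ap, Finset.sum_eq_single ∅]
  · simp [one_ap]
  · intro T _ hT; simp [one_ap, hT]
  · intro h; simp at h

instance : CommRing (SF α K) where
  __ := (inferInstance : AddCommGroup (SF α K))
  mul := (· * ·)
  one := 1
  mul_assoc := sf_mul_assoc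
  mul_comm := sf_mul_comm
  one_mul := sf_one_mul
  mul_one F := by rw [sf_mul_comm, sf_one_mul]
  left_distrib F G H := by
    funext S; simp only [mul_ap, add_ap, mul_add, Finset.sum_add_distrib]
  right_distrib F G H := by
    funext S; simp only [mul_ap, add_ap, add_mul, Finset.sum_add_distrib]
  zero_mul F := by funext S; simp [mul_ap, zero_ap]
  mul_zero F := by funext S; simp [mul_ap, zero_ap]

/-- scalar function -/
def Cf (x : K) : SF α K := fun S => if S = ∅ then x else 0

/-- scalars -/
def C : K →+* SF α K where
  toFun x := Cf x
  map_one' := rfl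
  map_zero' := by funext S; simp [zero_ap, Cf]
  map_add' x y := by
    funext S; rw [add_ap, Cf, Cf, Cf]; split_ifs <;> simp
  map_mul' x y := by
    funext S
    rw [mul_ap, Finset.sum_eq_single ∅]
    · simp [Cf]
    · intro T _ hT; simp [Cf, hT]
    · intro h; simp at h

theorem C_ap (x : K) (S : Finset α) : (C x : SF α K) S = if S = ∅ then x else 0 := rfl

theorem C_mul_ap (x : K) (F : SF α K) (S : Finset α) : ((C x : SF α K) * F) S = x * F S := by
  rw [mul_ap, Finset.sum_eq_single ∅]
  · simp [C_ap]
  · intro T _ hT; simp [C_ap, hT]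
  · intro h; simp at h

/-- sign twist function -/
def barf (F : SF α K) : SF α K := fun S => (-1) ^ S.card * F S

/-- sign twist -/
def bar : SF α K →+* SF α K where
  toFun F := barf F
  map_one' := by
    funext S; rw [barf, one_ap]; split_ifs with h <;> simp [h]
  map_zero' := by funext S; simp [barf, zero_ap]
  map_add' F G := by funext S; simp [barf, add_ap, mul_add]
  map_mul' F G := by
    funext S
    rw [barf, mul_ap, mul_ap, Finset.mul_sum]
    refine Finset.sum_congr rfl fun T hT => ?_
    have h := card_sdiff_add_card_eq_card (mem_powerset.mp hT)
    rw [barf, barf, ← h, pow_add]; ring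

theorem bar_ap (F : SF α K) (S : Finset α) : bar F S = (-1) ^ S.card * F S := rfl

theorem bar_C (x : K) : bar (C x : SF α K) = C x := by
  funext S; rw [bar_ap, C_ap]; split_ifs with h <;> simp [h]

/-- multiplicative set function -/
def Ef (c : α → K) : SF α K := fun S => ∏ s ∈ S, c s

theorem Ef_mul (c d : α → K) : Ef c * Ef d = Ef (fun s => c s + d s) := by
  funext S
  rw [mul_ap]
  simp only [Ef, Finset.prod_add]

theorem Ef_zero : Ef (fun _ : α => (0 : K)) = 1 := by
  funext S
  rw [one_ap, Ef, Finset.prod_const]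
  split_ifs with h
  · simp [h]
  · exact zero_pow (by simpa using h)

theorem bar_Ef (c : α → K) : bar (Ef c) = Ef (fun s => - c s) := by
  funext S
  rw [bar_ap, Ef, Ef, Finset.prod_neg]

theorem conv_congr {F F' G G' : SF α K} {S : Finset α} (h1 : ∀ T ⊆ S, F T = F' T)
    (h2 : ∀ T ⊆ S, G T = G' T) : (F * G) S = (F' * G') S := by
  rw [mul_ap, mul_ap]
  refine Finset.sum_congr rfl fun T hT => ?_
  rw [h1 T (mem_powerset.mp hT), h2 _ sdiff_subset]

/-- shift by a letter -/
def dl (j : α) (F : SF α K) : SF α K := fun S => F (insert j S)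

theorem dl_mul {j : α} {S : Finset α} (hj : j ∉ S) (F G : SF α K) :
    (F * G) (insert j S) = (dl j F * G) S + (F * dl j G) S := by
  rw [mul_ap, Finset.sum_powerset_insert hj, mul_ap, mul_ap, add_comm]
  congr 1
  · refine Finset.sum_congr rfl fun T hT => ?_
    rw [mem_powerset] at hT
    have : insert j S \ insert j T = S \ T := by
      ext z; simp only [mem_sdiff, mem_insert]
      by_cases hz : z = j
      · subst hz; simp [hj]
      · simp [hz]
    rw [this]; rfl
  · refine Finset.sum_congr rfl fun T hT => ?_
    rw [mem_powerset] at hT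
    have hjT : j ∉ T := fun h => hj (hT h)
    rw [insert_sdiff_of_notMem _ hjT]; rfl

end ring

section words
variable {α : Type*} [DecidableEq α] {K : Type*} [CommRing K]

/-- words using each letter of `S` exactly once -/
def words (S : Finset α) : Finset (List α) := (Multiset.lists S.val).toFinset

theorem mem_words {S : Finset α} {l : List α} : l ∈ words S ↔ l.Nodup ∧ l.toFinset = S := by
  unfold words
  rw [Multiset.mem_toFinset, Multiset.mem_lists_iff]
  constructor
  · intro h
    have hn : l.Nodup := by
      have := S.nodup; rw [h] at this; exact Multiset.coe_nodup.mp this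
    refine ⟨hn, ?_⟩
    apply Finset.val_injective
    rw [h, List.toFinset_val, hn.dedup]; rfl
  · rintro ⟨hn, rfl⟩
    rw [List.toFinset_val, hn.dedup]; rfl

theorem len_words {S : Finset α} {l : List α} (h : l ∈ words S) : l.length = S.card := by
  rw [mem_words] at h
  rw [← h.2, List.toFinset_card_of_nodup h.1]

theorem words_empty : words (∅ : Finset α) = {[]} := by
  ext l; rw [mem_words, mem_singleton]
  constructor
  · rintro ⟨_, h⟩; simpa using h
  · rintro rfl; simp

/-- sum of a word function over words -/
def W (φ : List α → K) : SF α K := fun S => ∑ w ∈ words S, φ w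

theorem W_ap (φ : List α → K) (S : Finset α) : W φ S = ∑ w ∈ words S, φ w := rfl

theorem W_congr {φ ψ : List α → K} {S : Finset α} (h : ∀ w ∈ words S, φ w = ψ w) :
    W φ S = W ψ S := Finset.sum_congr rfl h

theorem W_rec (φ : List α → K) (S : Finset α) :
    W φ S = (if S = ∅ then φ [] else 0) + ∑ m ∈ S, W (fun l => φ (m :: l)) (S.erase m) := by
  by_cases h : S = ∅
  · subst h; simp [W_ap, words_empty]
  · rw [if_neg h, zero_add]
    simp only [W_ap]
    rw [Finset.sum_sigma']
    symm
    refine Finset.sum_bij (fun p _ => p.1 :: p.2) ?_ ?_ ?_ ?_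
    · rintro ⟨m, l⟩ hp
      simp only [mem_sigma, mem_words] at hp ⊢
      obtain ⟨hm, hl, hS⟩ := hp
      have : m ∉ l := by
        intro hml; have : m ∈ l.toFinset := by simpa using hml
        rw [hS] at this; simp at this
      refine ⟨List.nodup_cons.mpr ⟨this, hl⟩, ?_⟩
      rw [List.toFinset_cons, hS, insert_erase hm]
    · rintro ⟨m, l⟩ _ ⟨m', l'⟩ _ h
      simp only [List.cons.injEq] at h
      obtain ⟨rfl, rfl⟩ := h; rfl
    · intro w hw
      rw [mem_words] at hw
      cases w with
      | nil => simp at hw; exact absurd hw.symm h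
      | cons m l =>
        refine ⟨⟨m, l⟩, ?_, rfl⟩
        simp only [mem_sigma, mem_words]
        have h1 := List.nodup_cons.mp hw.1
        refine ⟨?_, h1.2, ?_⟩
        · rw [← hw.2]; simp
        · rw [← hw.2, List.toFinset_cons, erase_insert (by simpa using h1.1)]
    · rintro ⟨m, l⟩ _; rfl

/-- concatenation convolution -/
def conv (φ ψ : List α → K) : List α → K
  | [] => φ [] * ψ []
  | a :: l => φ [] * ψ (a :: l) + conv (fun u => φ (a :: u)) ψ l

theorem W_mul (φ ψ : List α → K) : W φ * W ψ = W (conv φ ψ) := by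
  funext S
  induction hn : S.card generalizing S φ with
  | zero =>
    rw [card_eq_zero] at hn; subst hn
    simp [mul_ap, W_ap, words_empty, conv]
  | succ n ih =>
    have hS : S ≠ ∅ := by rintro rfl; simp at hn
    have e1 : (W φ * W ψ) S = φ [] * W ψ S +
        ∑ m ∈ S, (W (fun l => φ (m :: l)) * W ψ) (S.erase m) := by
      rw [mul_ap]
      simp only [W_rec φ, add_mul, Finset.sum_add_distrib]
      congr 1
      · rw [Finset.sum_eq_single ∅]
        · simp
        · intro T _ hT; simp [hT]
        · intro h; simp at h
      · simp only [mul_ap, Finset.sum_mul]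
        rw [Finset.sum_sigma', Finset.sum_sigma']
        refine Finset.sum_nbij' (fun p => ⟨p.2, p.1.erase p.2⟩) (fun p => ⟨insert p.1 p.2, p.1⟩)
          ?_ ?_ ?_ ?_ ?_
        · rintro ⟨T, m⟩ h
          simp only [mem_sigma, mem_powerset] at h ⊢
          exact ⟨h.1 h.2, erase_subset_erase _ h.1⟩
        · rintro ⟨m, T⟩ h
          simp only [mem_sigma, mem_powerset] at h ⊢
          exact ⟨insert_subset h.1 (h.2.trans (erase_subset _ _)), mem_insert_self _ _⟩
        · rintro ⟨T, m⟩ h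
          simp only [mem_sigma, mem_powerset] at h ⊢
          simp only [insert_erase h.2]
        · rintro ⟨m, T⟩ h
          simp only [mem_sigma, mem_powerset] at h ⊢
          rw [erase_insert]
          intro hm; have := h.2 hm; simp at this
        · rintro ⟨T, m⟩ h
          simp only [mem_sigma, mem_powerset] at h ⊢
          have : S.erase m \ T.erase m = S \ T := by
            ext z; simp only [mem_sdiff, mem_erase]
            have := h.2
            by_cases hz : z = m
            · subst hz; simp [this]
            · simp [hz]
          rw [this]
    rw [e1, W_rec (conv φ ψ), if_neg hS, zero_add, W_rec ψ, if_neg hS, zero_add, Finset.mul_sum,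
      ← Finset.sum_add_distrib]
    refine Finset.sum_congr rfl fun m hm => ?_
    rw [ih _ (S.erase m) (by rw [card_erase_of_mem hm, hn]; rfl)]
    simp only [W_ap, conv, Finset.sum_add_distrib, Finset.mul_sum]

theorem W_reverse (φ : List α → K) : W φ = W (fun l => φ l.reverse) := by
  funext S
  simp only [W_ap]
  refine Finset.sum_nbij' List.reverse List.reverse ?_ ?_ ?_ ?_ ?_ <;>
    simp +contextual [mem_words]

theorem W_add (φ ψ : List α → K) : W (fun w => φ w + ψ w) = W φ + W ψ := by
  funext S; simp only [add_ap, W_ap, Finset.sum_add_distrib]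

theorem W_smul (x : K) (φ : List α → K) : W (fun w => x * φ w) = C x * W φ := by
  funext S; simp only [C_mul_ap, W_ap, Finset.mul_sum]

theorem W_one : W (fun w : List α => if w = [] then (1 : K) else 0) = 1 := by
  funext S
  rw [one_ap]
  split_ifs with h
  · subst h; simp [W_ap, words_empty]
  · rw [W_ap]; apply Finset.sum_eq_zero
    intro w hw; rw [if_neg]
    rintro rfl; rw [mem_words] at hw; simp at hw; exact h hw.symm

/-- words containing a block -/
theorem sum_block (B : List α) (hB : B.Nodup) (hB0 : B ≠ []) (S : Finset α)
    (hd : Disjoint B.toFinset S) (φ : List α → K) :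
    ∑ w ∈ (words (B.toFinset ∪ S)).filter (fun w => B <:+: w), φ w =
      ∑ T ∈ S.powerset, ∑ u ∈ words T, ∑ v ∈ words (S \ T), φ (u ++ (B ++ v)) := by
  simp only [Finset.sum_sigma']
  symm
  have key : ∀ u v : List α, u ++ (B ++ v) ∈ words (B.toFinset ∪ S) ↔
      u ++ v ∈ words S := by
    intro u v
    have hp : (u ++ (B ++ v)).Perm (B ++ (u ++ v)) := by
      rw [← List.append_assoc, ← List.append_assoc]
      exact List.Perm.append_right _ List.perm_append_comm
    rw [mem_words, mem_words, hp.nodup_iff, List.toFinset_eq_of_perm _ _ hp, List.toFinset_append,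
      List.nodup_append']
    constructor
    · rintro ⟨⟨_, h1, h2⟩, h3⟩
      refine ⟨h1, ?_⟩
      have h2' : Disjoint B.toFinset (u ++ v).toFinset := by
        rw [Finset.disjoint_left]; intro z hz hz'
        exact h2 (by simpa using hz) (by simpa using hz')
      have := congrArg (fun X => X \ B.toFinset) h3
      simp only [union_sdiff_cancel_left h2', union_sdiff_cancel_left hd] at this
      exact this
    · rintro ⟨h1, h2⟩
      refine ⟨⟨hB, h1, ?_⟩, by rw [h2]⟩
      intro z hz hz'
      rw [← h2] at hd
      exact Finset.disjoint_left.mp hd (by simpa using hz) (List.mem_toFinset.mpr hz')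
  refine Finset.sum_bij (fun p _ => p.2.1 ++ (B ++ p.2.2)) ?_ ?_ ?_ ?_
  · rintro ⟨T, u, v⟩ hp
    simp only [mem_sigma, mem_powerset, mem_words] at hp
    obtain ⟨hT, ⟨hu, rfl⟩, hv, hv2⟩ := hp
    rw [mem_filter, key]
    refine ⟨?_, ⟨u, v, by simp⟩⟩
    rw [mem_words, List.nodup_append']
    refine ⟨⟨hu, hv, ?_⟩, ?_⟩
    · intro z hz hz'
      have : z ∈ v.toFinset := by simpa using hz'
      rw [hv2] at this; simp at this; exact this.2 hz
    · rw [List.toFinset_append, hv2, union_sdiff_of_subset hT]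
  · rintro ⟨T, u, v⟩ hp ⟨T', u', v'⟩ hp' h
    simp only [mem_sigma, mem_powerset, mem_words] at hp hp' h
    obtain ⟨b, B', rfl⟩ := List.exists_cons_of_ne_nil hB0
    have hbu : ∀ (T : Finset α) (u : List α), T ⊆ S → u.toFinset = T → b ∉ u := by
      intro T u hT hu hb
      exact Finset.disjoint_left.mp hd (show b ∈ _ by simp) (hT (hu ▸ by simpa using hb))
    have h1 := hbu T u hp.1 hp.2.1.2
    have h2 := hbu T' u' hp'.1 hp'.2.1.2
    have hv : ∀ (T : Finset α) (v : List α), v.toFinset = S \ T → b ∉ v := by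
      intro T v hv hb
      have : b ∈ v.toFinset := by simpa using hb
      rw [hv] at this
      exact Finset.disjoint_left.mp hd (show b ∈ _ by simp) (mem_sdiff.mp this).1
    have huu : u = u' := by
      have := congrArg (List.takeWhile (fun z => z ≠ b)) h
      rw [List.takeWhile_append_of_pos (l₁ := u), List.takeWhile_append_of_pos (l₁ := u')] at this
      · simpa using this
      · intro z hz; simp; rintro rfl; exact h2 hz
      · intro z hz; simp; rintro rfl; exact h1 hz
    subst huu
    have hvv : v = v' := by simpa using h
    subst hvv
    have hTT : T = T' := by rw [← hp.2.1.2, ← hp'.2.1.2]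
    subst hTT; rfl
  · intro w hw
    rw [mem_filter] at hw
    obtain ⟨hw, u, v, rfl⟩ := hw
    rw [List.append_assoc, key, mem_words, List.nodup_append', List.toFinset_append] at hw
    refine ⟨⟨u.toFinset, u, v⟩, ?_, by simp⟩
    simp only [mem_sigma, mem_powerset, mem_words]
    refine ⟨?_, ⟨hw.1.1, trivial⟩, hw.1.2.1, ?_⟩
    · rw [← hw.2]; exact subset_union_left
    · rw [← hw.2, union_sdiff_cancel_left]
      rw [Finset.disjoint_left]; intro z hz hz'
      exact hw.1.2.2 (by simpa using hz) (by simpa using hz')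
  · rintro ⟨T, u, v⟩ _; rfl

end words
end BF

set_option linter.unusedSectionVars false
namespace BF
open Finset

section steps
variable {α : Type*} [DecidableEq α] {K : Type*} [CommRing K]

/-- step list of a word -/
def st (r : α → α → Bool) : List α → List Bool
  | [] => []
  | [_] => []
  | a :: b :: l => r a b :: st r (b :: l)

/-- sign of a step -/
def sg (b : Bool) : ℤ := if b then 1 else -1

/-- total height -/
def ht : List Bool → ℤ
  | [] => 0
  | e :: s => sg e + ht s

/-- minimal height -/
def mn : List Bool → ℤ
  | [] => 0
  | e :: s => min 0 (sg e + mn s)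

/-- weight -/
def wt (x y : K) : List Bool → K
  | [] => 1
  | e :: s => (if e then x else y) * wt x y s

/-- cuts at a step -/
def cs (F G : List Bool → K) : List Bool → K
  | [] => 0
  | e :: s => F [] * G s + cs (fun u => F (e :: u)) G s

theorem mn_le (s : List Bool) : mn s ≤ 0 := by
  cases s <;> simp [mn]

theorem mn_le_ht (s : List Bool) : mn s ≤ ht s := by
  induction s with
  | nil => simp [mn, ht]
  | cons e s ih => simp only [mn, ht]; omega

/-- weight of nonnegative paths -/
def Pf (x y : K) (s : List Bool) : K := if 0 ≤ mn s then wt x y s else 0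
/-- weight of paths ending at their minimum -/
def Nf (x y : K) (s : List Bool) : K := if ht s ≤ mn s then wt x y s else 0
/-- thresholded version -/
def Nc (x y : K) (c : ℤ) (s : List Bool) : K := if ht s ≤ mn s ∧ ht s ≤ c then wt x y s else 0

theorem Nc_cons (x y : K) (c : ℤ) (hc : c ≤ 0) (e : Bool) (s : List Bool) :
    Nc x y c (e :: s) = (if e then x else y) * Nc x y (min 0 (c - sg e)) s := by
  unfold Nc
  simp only [wt, ht, mn, mul_ite, mul_zero]
  have h1 := mn_le s
  have h2 := mn_le_ht s
  refine if_congr ?_ rfl rfl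
  omega

theorem cs_mul (k : K) (F G : List Bool → K) (s : List Bool) :
    cs (fun u => k * F u) G s = k * cs F G s := by
  induction s generalizing F with
  | nil => simp [cs]
  | cons e s ih => simp only [cs, ih]; ring

theorem cs_main (x y : K) (s : List Bool) (c : ℤ) (hc : c ≤ 0) :
    x * y * cs (Nc x y c) (Pf x y) s =
      wt x y s * ((if mn s < c then x else 0) + (if mn s ≤ c ∧ mn s < ht s then y else 0)) := by
  induction s generalizing c with
  | nil =>
    have : ¬ (0 < c) := by omega
    simp [cs, mn, ht, this]
  | cons e s ih =>
    have h1 := mn_le s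
    have h2 := mn_le_ht s
    have h3 := ih (min 0 (c - sg e)) (by omega)
    simp only [cs, Nc_cons x y c hc, cs_mul, mul_add]
    have : x * y * ((if e = true then x else y) * cs (Nc x y (min 0 (c - sg e))) (Pf x y) s)
       = (if e = true then x else y) * (x * y * cs (Nc x y (min 0 (c - sg e))) (Pf x y) s) := by
      ring
    rw [this, h3]
    have e0 : Nc x y c [] = if 0 ≤ c then 1 else 0 := by simp [Nc, ht, mn, wt]
    have e1 : wt x y (e :: s) = (if e then x else y) * wt x y s := rfl
    have hm : mn (e :: s) = min 0 (sg e + mn s) := rfl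
    have hh : ht (e :: s) = sg e + ht s := rfl
    have hs : sg e = if e then 1 else -1 := rfl
    rw [e0, e1, Pf]
    clear h3 this ih e0 e1
    generalize wt x y s = z
    generalize mn (e :: s) = a' at *
    generalize ht (e :: s) = b' at *
    generalize mn s = a at *
    generalize ht s = b at *
    generalize sg e = f at *
    cases e <;> simp only [if_true, if_false, Bool.false_eq_true] at hs ⊢
    all_goals
      subst hs
      split_ifs <;> first | ring1 | (exfalso; omega)

theorem wh_steps (x y : K) (s : List Bool) :
    (x + y) * wt x y s = x * Pf x y s + y * Nf x y s + x * y * cs (Nf x y) (Pf x y) s := by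
  have hN : Nf x y = Nc x y 0 := by
    funext u
    unfold Nf Nc
    have h1 := mn_le u
    exact if_congr (by omega) rfl rfl
  rw [hN, cs_main x y s 0 le_rfl, ← hN]
  have h1 := mn_le s
  have h2 := mn_le_ht s
  unfold Pf Nf
  split_ifs <;> first | (exfalso; omega) | ring

/-- set function of step statistic over nonempty words -/
def V (r : α → α → Bool) (f : List Bool → K) : SF α K :=
  W (fun w => if w = [] then 0 else f (st r w))

theorem V_empty (r : α → α → Bool) (f : List Bool → K) : V r f ∅ = 0 := by
  simp [V, W_ap, words_empty]

theorem conv_cs (r : α → α → Bool) (F G : List Bool → K) (a : α) (l : List α) :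
    conv (fun u => F (st r (a :: u))) (fun w => if w = [] then 0 else G (st r w)) l
      = cs F G (st r (a :: l)) := by
  induction l generalizing a F with
  | nil => simp [conv, st, cs]
  | cons b l ih =>
    simp only [conv, st, cs]
    rw [← ih]
    simp

theorem WH (r : α → α → Bool) (x y : K) :
    C (x + y) * V r (wt x y) = C x * V r (Pf x y) + C y * V r (Nf x y)
      + C (x * y) * (V r (Nf x y) * V r (Pf x y)) := by
  unfold V
  rw [W_mul]
  simp only [← W_smul, ← W_add]
  congr 1
  funext w
  cases w with
  | nil => simp [conv]
  | cons a l =>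
    have : conv (fun w => if w = [] then 0 else Nf x y (st r w))
        (fun w => if w = [] then 0 else Pf x y (st r w)) (a :: l) =
        cs (Nf x y) (Pf x y) (st r (a :: l)) := by
      simp only [conv, if_true, zero_mul, zero_add, reduceCtorEq, if_false]
      exact conv_cs r _ _ a l
    rw [this]
    simpa using wh_steps x y (st r (a :: l))

theorem st_append (r : α → α → Bool) (u : List α) (c : α) (v : List α) :
    st r (u ++ c :: v) = st r (u ++ [c]) ++ st r (c :: v) := by
  induction u with
  | nil => simp [st]
  | cons a u ih =>
    cases u with
    | nil => simp [st]
    | cons b u => simpa [st] using ih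

theorem wt_append (x y : K) (s t : List Bool) : wt x y (s ++ t) = wt x y s * wt x y t := by
  induction s with
  | nil => simp [wt]
  | cons e s ih => simp [wt, ih, mul_assoc]

theorem ht_append (s t : List Bool) : ht (s ++ t) = ht s + ht t := by
  induction s with
  | nil => simp [ht]
  | cons e s ih => simp [ht, ih, add_assoc]

theorem V_insert (r : α → α → Bool) (f : List Bool → K) (j : α) (S : Finset α) (hj : j ∉ S) :
    V r f (insert j S) = ∑ T ∈ S.powerset, ∑ u ∈ words T, ∑ v ∈ words (S \ T),
      f (st r (u ++ (j :: v))) := by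
  have h := sum_block (K := K) [j] (by simp) (by simp) S (by simpa using hj)
    (fun w => if w = [] then 0 else f (st r w))
  have e : [j].toFinset ∪ S = insert j S := by simp
  rw [e, Finset.filter_true_of_mem] at h
  · rw [V, W_ap, h]
    simp
  · intro w hw
    rw [mem_words] at hw
    have : j ∈ w.toFinset := by rw [hw.2]; simp
    rw [List.mem_toFinset] at this
    obtain ⟨u, v, rfl⟩ := List.append_of_mem this
    exact ⟨u, v, by simp⟩

theorem V_insert_wt (r : α → α → Bool) (x y : K) (j : α) (S : Finset α) (hj : j ∉ S) :
    V r (wt x y) (insert j S) = ((W (fun u => wt x y (st r (u ++ [j]))) : SF α K) *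
      W (fun v => wt x y (st r (j :: v)))) S := by
  rw [V_insert _ _ _ _ hj, mul_ap]
  refine Finset.sum_congr rfl fun T _ => ?_
  rw [W_ap, W_ap, Finset.sum_mul_sum]
  refine Finset.sum_congr rfl fun u _ => Finset.sum_congr rfl fun v _ => ?_
  rw [st_append, wt_append]

/-- weight of a word with initial step according to `p` -/
def wtp (r : α → α → Bool) (x y : K) (p : α → Bool) : List α → K
  | [] => 1
  | a :: l => (if p a then x else y) * wt x y (st r (a :: l))

/-- weight of increasing words -/
def inc (r : α → α → Bool) (k : K) : (α → Bool) → List α → K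
  | _, [] => 1
  | p, a :: l => if p a then k * inc r k (r a) l else 0

theorem wt_cons (r : α → α → Bool) (x y : K) (a : α) (l : List α) :
    wt x y (st r (a :: l)) = wtp r x y (r a) l := by
  cases l <;> simp [st, wtp, wt]

theorem conv_smul (k : K) (F G : List α → K) (s : List α) :
    conv (fun u => k * F u) G s = k * conv F G s := by
  induction s generalizing F with
  | nil => simp [conv, mul_assoc]
  | cons e s ih => simp only [conv, ih]; ring

theorem conv_inc (r : α → α → Bool) (x y : K) (p : α → Bool) (v : List α) :
    conv (inc r (x - y) p) (fun v => if v = [] then 1 else y * wt x y (st r v)) v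
      = wtp r x y p v := by
  induction v generalizing p with
  | nil => simp [conv, inc, wtp]
  | cons a l ih =>
    simp only [conv, inc, wtp, reduceCtorEq, if_false, one_mul]
    by_cases h : p a
    · simp only [h, if_true, conv_smul, ih, ← wt_cons]; ring
    · simp only [h, if_false, Bool.false_eq_true]
      have : conv (fun _ => (0 : K)) (fun v => if v = [] then 1 else y * wt x y (st r v)) l = 0 := by
        have := conv_smul 0 (fun _ => (0 : K))
          (fun v => if v = [] then 1 else y * wt x y (st r v)) l
        simpa using this
      rw [this, add_zero]

theorem W_wtp (r : α → α → Bool) (x y : K) (p : α → Bool) :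
    W (wtp r x y p) = W (inc r (x - y) p) * (1 + C y * V r (wt x y)) := by
  have h2 : W (fun v => if v = [] then 1 else y * wt x y (st r v)) =
      1 + C y * V r (wt x y) := by
    unfold V
    rw [← W_one, ← W_smul, ← W_add]
    congr 1; funext w; split_ifs <;> simp
  rw [← h2, W_mul]
  congr 1; funext v; rw [conv_inc]

theorem W_inc (r : α → α → Bool) (k : K)
    (hmin : ∀ S : Finset α, S.Nonempty → ∃ m ∈ S, ∀ s ∈ S, s ≠ m → r m s ∧ ¬ r s m)
    (htr : ∀ a b c, r a b → r b c → r a c)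
    (p : α → Bool) (hp : ∀ a b, p a → r a b → p b) :
    W (inc r k p) = Ef (fun s => if p s then k else 0) := by
  funext S
  induction hn : S.card generalizing S p with
  | zero =>
    rw [card_eq_zero] at hn; subst hn
    simp [W_ap, words_empty, inc, Ef]
  | succ n ih =>
    have hS : S ≠ ∅ := by rintro rfl; simp at hn
    obtain ⟨m0, hm0, hm⟩ := hmin S (nonempty_iff_ne_empty.mpr hS)
    rw [W_rec, if_neg hS, zero_add]
    have e : ∀ m ∈ S, W (fun l => inc r k p (m :: l)) (S.erase m) =
        if p m then k * ∏ s ∈ S.erase m, (if r m s then k else 0) else 0 := by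
      intro m hm
      simp only [inc]
      split_ifs with h
      · rw [W_smul, C_mul_ap, ih (r m) (fun a b => htr m a b) (S.erase m)
          (by rw [card_erase_of_mem hm, hn]; rfl)]
        rfl
      · simp [W_ap]
    rw [Finset.sum_congr rfl e, Finset.sum_eq_single m0]
    · rw [Ef, ← Finset.mul_prod_erase S _ hm0]
      split_ifs with h
      · congr 1
        refine Finset.prod_congr rfl fun s hs => ?_
        rw [mem_erase] at hs
        have h1 := (hm s hs.2 hs.1).1
        rw [if_pos h1, if_pos (hp _ _ h h1)]
      · simp
    · intro m hmS hne
      split_ifs with h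
      · rw [Finset.prod_eq_zero (mem_erase.mpr ⟨hne.symm, hm0⟩), mul_zero]
        rw [if_neg (hm m hmS hne).2]
      · rfl
    · intro h; exact absurd hm0 h

end steps
end BF

set_option linter.unusedSectionVars false
namespace BF
open Finset

/-- the weight ring -/
abbrev KK := MvPolynomial (Fin 2) ℤ

noncomputable section
/-- weight of ascents -/
def xx : KK := MvPolynomial.X 0
/-- weight of descents -/
def yy : KK := MvPolynomial.X 1

/-- balance of a monomial -/
def dg (m : Fin 2 →₀ ℕ) : ℤ := m 0 - m 1

/-- all monomials have balance at least `c` -/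
def GeP (c : ℤ) (p : KK) : Prop := ∀ m ∈ p.support, c ≤ dg m
/-- all monomials have balance at most `c` -/
def LeP (c : ℤ) (p : KK) : Prop := ∀ m ∈ p.support, dg m ≤ c

theorem GeP.zero (c : ℤ) : GeP c 0 := by intro m hm; simp at hm
theorem LeP.zero (c : ℤ) : LeP c 0 := by intro m hm; simp at hm

theorem GeP.add {c : ℤ} {p q : KK} (hp : GeP c p) (hq : GeP c q) : GeP c (p + q) := by
  intro m hm
  rcases mem_union.mp (MvPolynomial.support_add hm) with h | h
  exacts [hp m h, hq m h]
theorem LeP.add {c : ℤ} {p q : KK} (hp : LeP c p) (hq : LeP c q) : LeP c (p + q) := by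
  intro m hm
  rcases mem_union.mp (MvPolynomial.support_add hm) with h | h
  exacts [hp m h, hq m h]
theorem GeP.neg {c : ℤ} {p : KK} (hp : GeP c p) : GeP c (-p) := by
  intro m hm; rw [MvPolynomial.support_neg] at hm; exact hp m hm
theorem LeP.neg {c : ℤ} {p : KK} (hp : LeP c p) : LeP c (-p) := by
  intro m hm; rw [MvPolynomial.support_neg] at hm; exact hp m hm
theorem GeP.sub {c : ℤ} {p q : KK} (hp : GeP c p) (hq : GeP c q) : GeP c (p - q) := by
  rw [sub_eq_add_neg]; exact hp.add hq.neg
theorem LeP.sub {c : ℤ} {p q : KK} (hp : LeP c p) (hq : LeP c q) : LeP c (p - q) := by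
  rw [sub_eq_add_neg]; exact hp.add hq.neg
theorem dg_add (a b : Fin 2 →₀ ℕ) : dg (a + b) = dg a + dg b := by
  simp [dg]; ring
theorem GeP.mul {c d : ℤ} {p q : KK} (hp : GeP c p) (hq : GeP d q) : GeP (c + d) (p * q) := by
  intro m hm
  obtain ⟨a, ha, b, hb, rfl⟩ := mem_add.mp (MvPolynomial.support_mul p q hm)
  rw [dg_add]; have := hp a ha; have := hq b hb; omega
theorem LeP.mul {c d : ℤ} {p q : KK} (hp : LeP c p) (hq : LeP d q) : LeP (c + d) (p * q) := by
  intro m hm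
  obtain ⟨a, ha, b, hb, rfl⟩ := mem_add.mp (MvPolynomial.support_mul p q hm)
  rw [dg_add]; have := hp a ha; have := hq b hb; omega
theorem GeP.mono {c d : ℤ} {p : KK} (hp : GeP c p) (h : d ≤ c) : GeP d p :=
  fun m hm => h.trans (hp m hm)
theorem LeP.mono {c d : ℤ} {p : KK} (hp : LeP c p) (h : c ≤ d) : LeP d p :=
  fun m hm => (hp m hm).trans h
theorem GeP.sum {ι : Type*} {c : ℤ} {s : Finset ι} {f : ι → KK} (h : ∀ i ∈ s, GeP c (f i)) :
    GeP c (∑ i ∈ s, f i) := by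
  classical
  induction s using Finset.induction_on with
  | empty => simpa using GeP.zero c
  | insert a s ha ih =>
    rw [Finset.sum_insert ha]
    exact (h a (by simp)).add (ih fun i hi => h i (by simp [hi]))
theorem LeP.sum {ι : Type*} {c : ℤ} {s : Finset ι} {f : ι → KK} (h : ∀ i ∈ s, LeP c (f i)) :
    LeP c (∑ i ∈ s, f i) := by
  classical
  induction s using Finset.induction_on with
  | empty => simpa using LeP.zero c
  | insert a s ha ih =>
    rw [Finset.sum_insert ha]
    exact (h a (by simp)).add (ih fun i hi => h i (by simp [hi]))
theorem one_supp {m : Fin 2 →₀ ℕ} (hm : m ∈ (1 : KK).support) : dg m = 0 := by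
  rw [MvPolynomial.support_one] at hm
  simp at hm; subst hm; simp [dg]
theorem GeP.one : GeP 0 1 := fun m hm => (one_supp hm).ge
theorem LeP.one : LeP 0 1 := fun m hm => (one_supp hm).le
theorem x_supp {m : Fin 2 →₀ ℕ} (hm : m ∈ xx.support) : dg m = 1 := by
  rw [xx, MvPolynomial.support_X] at hm
  simp at hm; subst hm; simp [dg]
theorem y_supp {m : Fin 2 →₀ ℕ} (hm : m ∈ yy.support) : dg m = -1 := by
  rw [yy, MvPolynomial.support_X] at hm
  simp at hm; subst hm; simp [dg]
theorem GeP.x : GeP 1 xx := fun m hm => (x_supp hm).ge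
theorem LeP.x : LeP 1 xx := fun m hm => (x_supp hm).le
theorem GeP.y : GeP (-1) yy := fun m hm => (y_supp hm).ge
theorem LeP.y : LeP (-1) yy := fun m hm => (y_supp hm).le
theorem GeP.two_mul {c : ℤ} {p : KK} (h : GeP c p) : GeP c (2 * p) := by
  rw [_root_.two_mul]; exact h.add h
theorem LeP.two_mul {c : ℤ} {p : KK} (h : LeP c p) : LeP c (2 * p) := by
  rw [_root_.two_mul]; exact h.add h

theorem GeP.wt (s : List Bool) : GeP (ht s) (wt xx yy s) := by
  induction s with
  | nil => exact GeP.one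
  | cons e s ih =>
    simp only [BF.wt, ht, sg]
    cases e
    · exact GeP.y.mul ih
    · exact GeP.x.mul ih
theorem LeP.wt (s : List Bool) : LeP (ht s) (wt xx yy s) := by
  induction s with
  | nil => exact LeP.one
  | cons e s ih =>
    simp only [BF.wt, ht, sg]
    cases e
    · exact LeP.y.mul ih
    · exact LeP.x.mul ih

theorem ge_le_zero {p q : KK} (h : p + q = 0) (hp : GeP 1 p) (hq : LeP (-1) q) :
    p = 0 ∧ q = 0 := by
  have hq' : q = -p := by linear_combination h
  have : p = 0 := by
    rw [← MvPolynomial.support_eq_empty, eq_empty_iff_forall_notMem]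
    intro m hm
    have h1 := hp m hm
    have h2 := hq m (by rw [hq', MvPolynomial.support_neg]; exact hm)
    omega
  exact ⟨this, by rw [hq', this, neg_zero]⟩

theorem xy_ne : xx - yy ≠ 0 := by
  intro h
  have := MvPolynomial.X_injective (R := ℤ) (σ := Fin 2) (sub_eq_zero.mp h)
  simp at this

section
variable {α : Type*} [DecidableEq α]

theorem uniq (G H N' P' : SF α KK) (S0 : Finset α) (hG : ∀ S ⊆ S0, GeP 1 (G S))
    (hH : ∀ S ⊆ S0, LeP (-1) (H S)) (hN : N' ∅ = 0) (hP : P' ∅ = 0)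
    (h : ∀ S ⊆ S0, (G * (1 + N') + H * (1 + P')) S = 0) : ∀ S ⊆ S0, G S = 0 ∧ H S = 0 := by
  intro S
  induction S using Finset.strongInduction with
  | H S ih =>
    intro hS
    have key : ∀ (G N' : SF α KK), N' ∅ = 0 → (∀ T ⊂ S, G T = 0) →
        (G * (1 + N')) S = G S := by
      intro G N' hN hG
      rw [mul_add, mul_one, add_ap, mul_ap, Finset.sum_eq_zero, add_zero]
      intro T hT
      rw [mem_powerset] at hT
      rcases eq_or_ssubset_of_subset hT with rfl | hT
      · simp [hN]
      · rw [hG T hT, zero_mul]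
    have h1 := h S hS
    rw [add_ap, key G N' hN (fun T hT => (ih T hT (hT.subset.trans hS)).1),
      key H P' hP (fun T hT => (ih T hT (hT.subset.trans hS)).2)] at h1
    exact ge_le_zero h1 (hG S hS) (hH S hS)

theorem GeS_mul {c d : ℤ} {F G : SF α KK} (S : Finset α) (hF : ∀ T ⊆ S, GeP c (F T))
    (hG : ∀ T ⊆ S, GeP d (G T)) : GeP (c + d) ((F * G) S) := by
  rw [mul_ap]
  exact GeP.sum fun T hT => (hF T (mem_powerset.mp hT)).mul (hG _ sdiff_subset)
theorem LeS_mul {c d : ℤ} {F G : SF α KK} (S : Finset α) (hF : ∀ T ⊆ S, LeP c (F T))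
    (hG : ∀ T ⊆ S, LeP d (G T)) : LeP (c + d) ((F * G) S) := by
  rw [mul_ap]
  exact LeP.sum fun T hT => (hF T (mem_powerset.mp hT)).mul (hG _ sdiff_subset)

theorem V_Pf_ge (r : α → α → Bool) (S : Finset α) : GeP 0 (V r (Pf xx yy) S) := by
  rw [V, W_ap]
  refine GeP.sum fun w _ => ?_
  unfold Pf
  split_ifs with h1 h2
  · exact GeP.zero _
  · exact (GeP.wt _).mono (h2.trans (mn_le_ht _))
  · exact GeP.zero _
theorem V_Nf_le (r : α → α → Bool) (S : Finset α) : LeP 0 (V r (Nf xx yy) S) := by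
  rw [V, W_ap]
  refine LeP.sum fun w _ => ?_
  unfold Nf
  split_ifs with h1 h2
  · exact LeP.zero _
  · exact (LeP.wt _).mono (h2.trans (mn_le _))
  · exact LeP.zero _

theorem GeS_one (S : Finset α) : GeP 0 ((1 : SF α KK) S) := by
  rw [one_ap]; split_ifs
  exacts [GeP.one, GeP.zero _]
theorem LeS_one (S : Finset α) : LeP 0 ((1 : SF α KK) S) := by
  rw [one_ap]; split_ifs
  exacts [LeP.one, LeP.zero _]

theorem one_P_ge (r : α → α → Bool) (S : Finset α) :
    GeP 0 ((1 + C xx * V r (Pf xx yy) : SF α KK) S) := by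
  rw [add_ap, C_mul_ap]
  exact (GeS_one S).add ((GeP.x.mul (V_Pf_ge r S)).mono (by norm_num))
theorem one_N_le (r : α → α → Bool) (S : Finset α) :
    LeP 0 ((1 + C yy * V r (Nf xx yy) : SF α KK) S) := by
  rw [add_ap, C_mul_ap]
  exact (LeS_one S).add ((LeP.y.mul (V_Nf_le r S)).mono (by norm_num))

end
end

section rev
variable {α : Type*} [DecidableEq α] {K : Type*} [CommRing K]

theorem st_snoc2 (r : α → α → Bool) (u : List α) (a b : α) :
    st r (u ++ [a, b]) = st r (u ++ [a]) ++ [r a b] := by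
  rw [st_append]; simp [st]

theorem st_reverse (r : α → α → Bool) (l : List α) :
    st r l.reverse = (st (fun a b => r b a) l).reverse := by
  induction l with
  | nil => simp [st]
  | cons a l ih =>
    cases l with
    | nil => simp [st]
    | cons b l =>
      have : (a :: b :: l).reverse = l.reverse ++ [b, a] := by simp
      rw [this, st_snoc2]
      have h2 : (b :: l).reverse = l.reverse ++ [b] := by simp
      rw [← h2, ih]
      simp [st]

theorem wt_reverse (x y : K) (s : List Bool) : wt x y s.reverse = wt x y s := by
  induction s with
  | nil => rfl
  | cons e s ih => rw [List.reverse_cons, wt_append, ih]; simp [wt, mul_comm]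

theorem ht_reverse (s : List Bool) : ht s.reverse = ht s := by
  induction s with
  | nil => rfl
  | cons e s ih => rw [List.reverse_cons, ht_append, ih]; simp [ht, add_comm]

theorem st_congr {r r' : α → α → Bool} (w : List α)
    (h : ∀ a ∈ w, ∀ b ∈ w, r a b = r' a b) : st r w = st r' w := by
  induction w with
  | nil => rfl
  | cons a l ih =>
    cases l with
    | nil => rfl
    | cons b l =>
      simp only [st]
      rw [h a (by simp) b (by simp), ih fun c hc d hd => h c (by simp [hc]) d (by simp [hd])]

theorem length_st (r : α → α → Bool) (w : List α) : (st r w).length = w.length - 1 := by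
  induction w with
  | nil => rfl
  | cons a l ih =>
    cases l with
    | nil => rfl
    | cons b l => simp only [st, List.length_cons, ih]; omega

theorem ht_parity (s : List Bool) : ∃ k : ℤ, ht s = s.length + 2 * k := by
  induction s with
  | nil => exact ⟨0, by simp [ht]⟩
  | cons e s ih =>
    obtain ⟨k, hk⟩ := ih
    cases e
    · exact ⟨k - 1, by simp [ht, hk, sg]; ring⟩
    · exact ⟨k, by simp [ht, hk, sg]; ring⟩

end rev
end BF

set_option linter.unusedSectionVars false
namespace BF
open Finset

noncomputable section
variable {α : Type*} [LinearOrder α]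

/-- the order as a boolean relation -/
def lt' (a b : α) : Bool := decide (a < b)
/-- the reversed order as a boolean relation -/
def gt' (a b : α) : Bool := decide (b < a)

/-- all words -/
def AA : SF α KK := V lt' (wt xx yy)
/-- ballot words -/
def PP : SF α KK := V lt' (Pf xx yy)
/-- reverse words -/
def NN : SF α KK := V lt' (Nf xx yy)

theorem V_congr_rel {r r' : α → α → Bool} {f : List Bool → KK} {S : Finset α}
    (h : ∀ a ∈ S, ∀ b ∈ S, r a b = r' a b) : V r f S = V r' f S := by
  refine W_congr fun w hw => ?_
  rw [mem_words] at hw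
  rw [st_congr w (r' := r')]
  intro a ha b hb
  exact h a (by rw [← hw.2]; simpa using ha) b (by rw [← hw.2]; simpa using hb)

theorem sf_ap {F G : SF α KK} (h : F = G) (T : Finset α) : F T = G T := by rw [h]

theorem F_fact : (1 + C (xx + yy) * AA : SF α KK) = (1 + C xx * PP) * (1 + C yy * NN) := by
  have := WH (lt' (α := α)) xx yy
  unfold AA PP NN
  rw [this]
  simp only [map_mul]
  ring

theorem W_wtp_lt (p : α → Bool) (hp : ∀ a b, p a → a < b → p b) :
    W (wtp lt' xx yy p) = Ef (fun s => if p s then xx - yy else 0) * (1 + C yy * AA) := by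
  rw [W_wtp, W_inc]
  · rfl
  · intro S hS
    refine ⟨S.min' hS, S.min'_mem hS, fun s hs hne => ?_⟩
    have : S.min' hS ≤ s := S.min'_le s hs
    simp only [lt', decide_eq_true_eq]
    exact ⟨lt_of_le_of_ne this hne.symm, not_lt.mpr this⟩
  · intro a b c; simp only [lt', decide_eq_true_eq]; exact lt_trans
  · intro a b; simp only [lt', decide_eq_true_eq]; exact hp a b

theorem AA_gt : (V gt' (wt xx yy) : SF α KK) = AA := by
  unfold AA V
  rw [W_reverse]
  congr 1
  funext w
  rw [st_reverse, wt_reverse]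
  simp only [List.reverse_eq_nil_iff]
  rfl

theorem W_wtp_gt (p : α → Bool) (hp : ∀ a b, p a → b < a → p b) :
    W (wtp gt' xx yy p) = Ef (fun s => if p s then xx - yy else 0) * (1 + C yy * AA) := by
  rw [W_wtp, W_inc, AA_gt]
  · intro S hS
    refine ⟨S.max' hS, S.max'_mem hS, fun s hs hne => ?_⟩
    have : s ≤ S.max' hS := S.le_max' s hs
    simp only [gt', decide_eq_true_eq]
    exact ⟨lt_of_le_of_ne this hne, not_lt.mpr this⟩
  · intro a b c; simp only [gt', decide_eq_true_eq]; exact fun h h' => h'.trans h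
  · intro a b; simp only [gt', decide_eq_true_eq]; exact hp a b

theorem W_true (r : α → α → Bool) : W (wtp r xx yy (fun _ => true)) = 1 + C xx * V r (wt xx yy) := by
  unfold V
  rw [← W_one, ← W_smul, ← W_add]
  congr 1; funext w
  cases w <;> simp [wtp]
theorem W_false (r : α → α → Bool) : W (wtp r xx yy (fun _ => false)) = 1 + C yy * V r (wt xx yy) := by
  unfold V
  rw [← W_one, ← W_smul, ← W_add]
  congr 1; funext w
  cases w <;> simp [wtp]

/-- the exponential -/
def EE : SF α KK := Ef (fun _ => xx - yy)

theorem XA : (1 + C xx * AA : SF α KK) = EE * (1 + C yy * AA) := by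
  have := W_wtp_lt (α := α) (fun _ => true) (by simp)
  rw [W_true] at this
  simpa [EE, AA] using this

theorem EE_bar : (EE : SF α KK) * bar EE = 1 := by
  rw [EE, bar_Ef, Ef_mul, ← Ef_zero]; simp

theorem XA_bar : (1 + C xx * bar AA : SF α KK) = bar EE * (1 + C yy * bar AA) := by
  have := congrArg bar (XA (α := α))
  simpa [map_add, map_mul, bar_C] using this

theorem RR : (AA + bar AA + (C xx + C yy) * (AA * bar AA) : SF α KK) = 0 := by
  have h : ((C xx - C yy) * (AA + bar AA + (C xx + C yy) * (AA * bar AA)) : SF α KK) = 0 := by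
    linear_combination (1 + C xx * bar AA) * XA (α := α) + EE * (1 + C yy * AA) * XA_bar (α := α)
      + (1 + C yy * AA) * (1 + C yy * bar AA) * EE_bar (α := α)
  rw [← map_sub] at h
  funext S
  have h2 := congrFun h S
  rw [C_mul_ap] at h2
  rcases mul_eq_zero.mp h2 with h3 | h3
  · exact absurd h3 xy_ne
  · exact h3

/-- exponential of letters above `j` -/
def Ep (j : α) : SF α KK := Ef (fun s => if j < s then xx - yy else 0)
/-- exponential of letters not above `j` -/
def Eq' (j : α) : SF α KK := Ef (fun s => if j < s then 0 else xx - yy)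

theorem EpEq (j : α) : Ep j * Eq' j = EE := by
  rw [Ep, Eq', Ef_mul, EE]
  congr 1; funext s; split_ifs <;> simp

theorem Ep_bar (j : α) : bar (Ep j) = Eq' j * bar EE := by
  rw [Ep, Eq', EE, bar_Ef, bar_Ef, Ef_mul]
  congr 1; funext s; split_ifs <;> simp
theorem Eq_bar (j : α) : bar (Eq' j) = Ep j * bar EE := by
  rw [Ep, Eq', EE, bar_Ef, bar_Ef, Ef_mul]
  congr 1; funext s; split_ifs <;> simp

/-- words after `j` -/
def aa (j : α) : SF α KK := Ep j * (1 + C yy * AA)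
/-- words before `j` -/
def bb (j : α) : SF α KK := Eq' j * (1 + C yy * AA)
/-- combined -/
def ZZ (j : α) : SF α KK := C xx * bb j + C yy * aa j

theorem main1_alg (j : α) :
    (C xx + C yy) * ((1 + C yy * AA) * aa j + bb j * (1 + C xx * AA)) =
      (ZZ j + bar (ZZ j)) * (1 + C (xx + yy) * AA) := by
  have h1 : bar (ZZ j) = (C xx * Ep j + C yy * Eq' j) * (1 + C xx * bar AA) := by
    unfold ZZ aa bb
    simp only [map_add, map_mul, bar_C, Ep_bar, Eq_bar, map_one]
    linear_combination -(C xx * Ep j + C yy * Eq' j) * XA_bar (α := α)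
  rw [h1, map_add]
  unfold ZZ aa bb
  linear_combination (-(C xx * Ep j + C yy * Eq' j) * C xx) * RR (α := α)

theorem main2_alg :
    ((C xx + C yy) * ((1 + C xx * AA) * (1 + C yy * AA)) : SF α KK) =
      (C xx + C yy + C (xx * yy) * (AA + bar AA)) * (1 + C (xx + yy) * AA) := by
  rw [map_add, map_mul]
  linear_combination (-C xx * C yy) * RR (α := α)

theorem WH_insert (r : α → α → Bool) (j : α) (S : Finset α) (hj : j ∉ S) :
    ((C xx + C yy) * ((W (fun u => wt xx yy (st r (u ++ [j]))) : SF α KK) *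
      W (fun v => wt xx yy (st r (j :: v)))) : SF α KK) S =
    (C xx * dl j (V r (Pf xx yy)) * (1 + C yy * V r (Nf xx yy)) +
      C yy * dl j (V r (Nf xx yy)) * (1 + C xx * V r (Pf xx yy)) : SF α KK) S := by
  have h := congrFun (WH r xx yy) (insert j S)
  rw [C_mul_ap, V_insert_wt _ _ _ _ _ hj, ← C_mul_ap, map_add] at h
  rw [h]
  have e : (C xx * dl j (V r (Pf xx yy)) * (1 + C yy * V r (Nf xx yy)) +
      C yy * dl j (V r (Nf xx yy)) * (1 + C xx * V r (Pf xx yy)) : SF α KK) =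
      C xx * dl j (V r (Pf xx yy)) + C yy * dl j (V r (Nf xx yy)) +
      C (xx * yy) * (dl j (V r (Nf xx yy)) * V r (Pf xx yy) +
        V r (Nf xx yy) * dl j (V r (Pf xx yy))) := by
    rw [map_mul]; ring
  rw [e]
  simp only [add_ap, C_mul_ap]
  rw [dl_mul hj]
  rfl

theorem aft (r : α → α → Bool) (j : α) :
    (W (fun v => wt xx yy (st r (j :: v))) : SF α KK) = W (wtp r xx yy (r j)) := by
  congr 1; funext v; rw [wt_cons]

theorem bef (r : α → α → Bool) (j : α) :
    (W (fun u => wt xx yy (st r (u ++ [j]))) : SF α KK) =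
      W (wtp (fun a b => r b a) xx yy (fun a => r a j)) := by
  rw [W_reverse]
  congr 1; funext v
  have : v.reverse ++ [j] = (j :: v).reverse := by simp
  rw [this, st_reverse, wt_reverse, wt_cons]

theorem wtp_congr {r r' : α → α → Bool} {p p' : α → Bool} {S : Finset α}
    (h : ∀ a ∈ S, ∀ b ∈ S, r a b = r' a b) (hp : ∀ a ∈ S, p a = p' a) :
    W (wtp r xx yy p) S = W (wtp r' xx yy p') S := by
  refine W_congr fun w hw => ?_
  rw [mem_words] at hw
  cases w with
  | nil => rfl
  | cons a l =>
    simp only [wtp]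
    rw [st_congr (a :: l) (r' := r'), hp a (by rw [← hw.2]; simp)]
    intro a ha b hb
    exact h a (by rw [← hw.2]; simpa using ha) b (by rw [← hw.2]; simpa using hb)

theorem aft_lt (j : α) : (W (fun v => wt xx yy (st lt' (j :: v))) : SF α KK) = aa j := by
  rw [aft, W_wtp_lt, aa, Ep]
  · simp [lt']
  · intro a b; simp only [lt', decide_eq_true_eq]; exact fun h h' => h.trans h'

theorem bef_lt (j : α) (S : Finset α) (hj : j ∉ S) :
    (W (fun u => wt xx yy (st lt' (u ++ [j]))) : SF α KK) S = bb j S := by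
  rw [bef]
  have : (fun a b : α => lt' b a) = gt' := rfl
  rw [this, W_wtp_gt, bb]
  · refine conv_congr (fun T hT => ?_) fun T hT => rfl
    unfold Eq' Ef
    refine Finset.prod_congr rfl fun s hs => ?_
    have hne : s ≠ j := by rintro rfl; exact hj (hT hs)
    by_cases h : j < s
    · simp [lt', h, not_lt.mpr h.le]
    · simp [lt', h, lt_of_le_of_ne (not_lt.mp h) hne]
  · intro a b; simp only [lt', decide_eq_true_eq]; exact fun h h' => h'.trans h

/-- `j` is below everything as a target -/
def r1 (j a b : α) : Bool := decide (a < b ∧ b ≠ j)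
/-- `j` is below everything as a source -/
def r2 (j a b : α) : Bool := decide (a < b ∨ a = j)

theorem r1_eq {j a b : α} (h : b ≠ j) : r1 j a b = lt' a b := by simp [r1, lt', h]
theorem r2_eq {j a b : α} (h : a ≠ j) : r2 j a b = lt' a b := by simp [r2, lt', h]

theorem aft_r1 (j : α) (S : Finset α) (hj : j ∉ S) :
    (W (fun v => wt xx yy (st (r1 j) (j :: v))) : SF α KK) S = aa j S := by
  rw [← aft_lt, aft, aft]
  exact wtp_congr (fun a ha b hb => r1_eq (by rintro rfl; exact hj hb))
    (fun a ha => r1_eq (by rintro rfl; exact hj ha))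
theorem bef_r1 (j : α) (S : Finset α) (hj : j ∉ S) :
    (W (fun u => wt xx yy (st (r1 j) (u ++ [j]))) : SF α KK) S = (1 + C yy * AA : SF α KK) S := by
  rw [bef, ← AA_gt, ← W_false]
  exact wtp_congr (fun a ha b hb => r1_eq (by rintro rfl; exact hj ha))
    (fun a ha => by simp [r1])
theorem bef_r2 (j : α) (S : Finset α) (hj : j ∉ S) :
    (W (fun u => wt xx yy (st (r2 j) (u ++ [j]))) : SF α KK) S = bb j S := by
  rw [← bef_lt j S hj, bef, bef]
  exact wtp_congr (fun a ha b hb => r2_eq (by rintro rfl; exact hj hb))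
    (fun a ha => r2_eq (by rintro rfl; exact hj ha))
theorem aft_r2 (j : α) (S : Finset α) (hj : j ∉ S) :
    (W (fun v => wt xx yy (st (r2 j) (j :: v))) : SF α KK) S = (1 + C xx * AA : SF α KK) S := by
  rw [aft, AA, ← W_true]
  exact wtp_congr (fun a ha b hb => r2_eq (by rintro rfl; exact hj ha))
    (fun a ha => by simp [r2])
theorem aft_max (M : α) (S : Finset α) (hM : ∀ s ∈ S, s < M) :
    (W (fun v => wt xx yy (st lt' (M :: v))) : SF α KK) S = (1 + C yy * AA : SF α KK) S := by
  rw [aft, AA, ← W_false]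
  exact wtp_congr (fun a ha b hb => rfl) (fun a ha => by simp [lt', (hM a ha).le])
theorem bef_max (M : α) (S : Finset α) (hM : ∀ s ∈ S, s < M) :
    (W (fun u => wt xx yy (st lt' (u ++ [M]))) : SF α KK) S = (1 + C xx * AA : SF α KK) S := by
  rw [bef, ← AA_gt, ← W_true]
  exact wtp_congr (fun a ha b hb => rfl) (fun a ha => by simp [lt', hM a ha])

/-- part of `ZZ + bar ZZ` -/
def Zpart (R : ℤ → Prop) [DecidablePred R] (j : α) : SF α KK := fun S =>
  if Even S.card then 2 * ∑ w ∈ words S,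
    ((if R (ht (st lt' (w ++ [j])) + 1) then xx * wt xx yy (st lt' (w ++ [j])) else 0) +
     (if R (ht (st lt' (j :: w)) - 1) then yy * wt xx yy (st lt' (j :: w)) else 0)) else 0

/-- part of `AA + bar AA` -/
def Apart (R : ℤ → Prop) [DecidablePred R] : SF α KK := fun S =>
  if Even S.card then 2 * V lt' (fun s => if R (ht s) then wt xx yy s else 0) S else 0

/-- positive part -/
def Zpos (j : α) : SF α KK := Zpart (fun k => 0 < k) j
/-- negative part -/
def Zneg (j : α) : SF α KK := Zpart (fun k => k < 0) j
/-- positive part -/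
def Apos : SF α KK := Apart (fun k => 0 < k)
/-- negative part -/
def Aneg : SF α KK := Apart (fun k => k < 0)

theorem Zpart_add (j : α) (S : Finset α) (hj : j ∉ S) :
    (ZZ j + bar (ZZ j)) S = Zpos j S + Zneg j S := by
  rw [add_ap, bar_ap]
  unfold Zpos Zneg Zpart
  by_cases h : Even S.card
  · rw [if_pos h, if_pos h, h.neg_one_pow, one_mul, ← two_mul, ← mul_add, ← sum_add_distrib]
    congr 1
    rw [ZZ, add_ap, C_mul_ap, C_mul_ap, ← bef_lt j S hj, ← aft_lt, W_ap, W_ap, mul_sum, mul_sum,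
      ← sum_add_distrib]
    refine Finset.sum_congr rfl fun w hw => ?_
    have hl := len_words hw
    obtain ⟨m, hm⟩ := h
    obtain ⟨k1, h1⟩ := ht_parity (st lt' (w ++ [j]))
    obtain ⟨k2, h2⟩ := ht_parity (st lt' (j :: w))
    rw [length_st] at h1 h2
    simp only [List.length_append, List.length_cons, List.length_nil] at h1 h2
    have : w.length + (0 + 1) - 1 = m + m := by omega
    rw [this] at h1
    have : w.length + 1 - 1 = m + m := by omega
    rw [this] at h2
    split_ifs <;> first | (exfalso; omega) | ring
  · rw [if_neg h, if_neg h, (Nat.not_even_iff_odd.mp h).neg_one_pow]; ring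

theorem Apart_add (S : Finset α) :
    (AA + bar AA : SF α KK) S = Apos S + Aneg S := by
  rw [add_ap, bar_ap]
  unfold Apos Aneg Apart
  by_cases h : Even S.card
  · rw [if_pos h, if_pos h, h.neg_one_pow, one_mul, ← two_mul, ← mul_add]
    congr 1
    simp only [AA, V, W_ap]
    rw [← sum_add_distrib]
    refine Finset.sum_congr rfl fun w hw => ?_
    have hl := len_words hw
    cases w with
    | nil => simp
    | cons a w =>
    obtain ⟨m, hm⟩ := h
    obtain ⟨k1, h1⟩ := ht_parity (st lt' (a :: w))
    rw [length_st] at h1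
    simp only [List.length_cons] at h1 hl
    have : ((w.length + 1 - 1 : ℕ) : ℤ) = 2 * m - 1 := by omega
    rw [this] at h1
    simp only [reduceCtorEq, if_false]
    split_ifs <;> first | (exfalso; omega) | ring
  · rw [if_neg h, if_neg h, (Nat.not_even_iff_odd.mp h).neg_one_pow]; ring

theorem Zpart_ge (j : α) (S : Finset α) : GeP 1 (Zpos j S) := by
  unfold Zpos Zpart
  split_ifs
  · refine (GeP.sum fun w _ => GeP.add ?_ ?_).two_mul
    · split_ifs with h
      · exact (GeP.x.mul (GeP.wt _)).mono (by omega)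
      · exact GeP.zero _
    · split_ifs with h
      · exact (GeP.y.mul (GeP.wt _)).mono (by omega)
      · exact GeP.zero _
  · exact GeP.zero _
theorem Zpart_le (j : α) (S : Finset α) : LeP (-1) (Zneg j S) := by
  unfold Zneg Zpart
  split_ifs
  · refine (LeP.sum fun w _ => LeP.add ?_ ?_).two_mul
    · split_ifs with h
      · exact (LeP.x.mul (LeP.wt _)).mono (by omega)
      · exact LeP.zero _
    · split_ifs with h
      · exact (LeP.y.mul (LeP.wt _)).mono (by omega)
      · exact LeP.zero _
  · exact LeP.zero _
theorem Apart_ge (S : Finset α) : GeP 1 (Apos S) := by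
  unfold Apos Apart V
  simp only [W_ap]
  split_ifs
  · refine (GeP.sum fun w _ => ?_).two_mul
    split_ifs with h1 h
    · exact GeP.zero _
    · exact (GeP.wt _).mono (by omega)
    · exact GeP.zero _
  · exact GeP.zero _
theorem Apart_le (S : Finset α) : LeP (-1) (Aneg S) := by
  unfold Aneg Apart V
  simp only [W_ap]
  split_ifs
  · refine (LeP.sum fun w _ => ?_).two_mul
    split_ifs with h1 h
    · exact LeP.zero _
    · exact (LeP.wt _).mono (by omega)
    · exact LeP.zero _
  · exact LeP.zero _

theorem WH_cong (r : α → α → Bool) (j : α) (T : Finset α) (hjT : j ∉ T)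
    (hr : ∀ a ≠ j, ∀ b ≠ j, r a b = lt' a b) :
      (C xx * dl j (V r (Pf xx yy)) * (1 + C yy * V r (Nf xx yy)) +
        C yy * dl j (V r (Nf xx yy)) * (1 + C xx * V r (Pf xx yy)) : SF α KK) T =
      (C xx * dl j (V r (Pf xx yy)) * (1 + C yy * NN) +
        C yy * dl j (V r (Nf xx yy)) * (1 + C xx * PP) : SF α KK) T := by
  have hV : ∀ f, ∀ U ⊆ T, V r f U = (V lt' f : SF α KK) U := fun f U hU => V_congr_rel
    fun a ha b hb => hr a (by rintro rfl; exact hjT (hU ha)) b (by rintro rfl; exact hjT (hU hb))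
  have h1 : ∀ (x : KK) f, ∀ U ⊆ T, (1 + C x * V r f : SF α KK) U =
      (1 + C x * V lt' f : SF α KK) U := by
    intro x f U hU
    rw [add_ap, add_ap, C_mul_ap, C_mul_ap, hV _ U hU]
  rw [add_ap, add_ap, PP, NN, conv_congr (fun _ _ => rfl) (h1 yy (Nf xx yy)),
    conv_congr (fun _ _ => rfl) (h1 xx (Pf xx yy))]

theorem main1 (j : α) (S : Finset α) (hj : j ∉ S) :
    (C xx * (dl j (V (r1 j) (Pf xx yy)) + dl j (V (r2 j) (Pf xx yy))) : SF α KK) S =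
      (Zpos j * (1 + C xx * PP) : SF α KK) S := by
  have U := uniq
    (C xx * (dl j (V (r1 j) (Pf xx yy)) + dl j (V (r2 j) (Pf xx yy))) -
      Zpos j * (1 + C xx * PP))
    (C yy * (dl j (V (r1 j) (Nf xx yy)) + dl j (V (r2 j) (Nf xx yy))) -
      Zneg j * (1 + C yy * NN))
    (C yy * NN) (C xx * PP) S ?_ ?_ ?_ ?_ ?_ S le_rfl
  · exact sub_eq_zero.mp U.1
  · intro T _
    rw [sub_ap, C_mul_ap]
    refine GeP.sub ?_ ?_
    · exact (GeP.x.mul ((V_Pf_ge _ _).add (V_Pf_ge _ _))).mono (by norm_num)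
    · exact (GeS_mul T (fun T _ => Zpart_ge j T) (fun T _ => one_P_ge _ T)).mono (by norm_num)
  · intro T _
    rw [sub_ap, C_mul_ap]
    refine LeP.sub ?_ ?_
    · exact (LeP.y.mul ((V_Nf_le _ _).add (V_Nf_le _ _))).mono (by norm_num)
    · exact (LeS_mul T (fun T _ => Zpart_le j T) (fun T _ => one_N_le _ T)).mono (by norm_num)
  · rw [C_mul_ap, NN, V_empty, mul_zero]
  · rw [C_mul_ap, PP, V_empty, mul_zero]
  · intro T hT
    have hjT : j ∉ T := fun h => hj (hT h)
    have e1 := WH_insert (r1 j) j T hjT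
    have e2 := WH_insert (r2 j) j T hjT
    rw [WH_cong (r1 j) j T hjT (fun a ha b hb => r1_eq hb)] at e1
    rw [WH_cong (r2 j) j T hjT (fun a ha b hb => r2_eq ha)] at e2
    have hU : ∀ U ⊆ T, j ∉ U := fun U h h' => hjT (h h')
    have e3 : ((C xx + C yy) * ((W (fun u => wt xx yy (st (r1 j) (u ++ [j]))) : SF α KK) *
        W (fun v => wt xx yy (st (r1 j) (j :: v)))) : SF α KK) T =
        ((C xx + C yy) * ((1 + C yy * AA) * aa j) : SF α KK) T :=
      conv_congr (fun _ _ => rfl) fun U hU' => conv_congr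
        (fun U' hU'' => bef_r1 j U' (hU _ (hU''.trans hU')))
        (fun U' hU'' => aft_r1 j U' (hU _ (hU''.trans hU')))
    have e4 : ((C xx + C yy) * ((W (fun u => wt xx yy (st (r2 j) (u ++ [j]))) : SF α KK) *
        W (fun v => wt xx yy (st (r2 j) (j :: v)))) : SF α KK) T =
        ((C xx + C yy) * (bb j * (1 + C xx * AA)) : SF α KK) T :=
      conv_congr (fun _ _ => rfl) fun U hU' => conv_congr
        (fun U' hU'' => bef_r2 j U' (hU _ (hU''.trans hU')))
        (fun U' hU'' => aft_r2 j U' (hU _ (hU''.trans hU')))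
    rw [e3] at e1
    rw [e4] at e2
    have e5 := congrFun (main1_alg j) T
    rw [mul_add, add_ap, e1, e2, F_fact] at e5
    have e6 : ((ZZ j + bar (ZZ j)) * ((1 + C xx * PP) * (1 + C yy * NN)) : SF α KK) T =
        ((Zpos j + Zneg j) * ((1 + C xx * PP) * (1 + C yy * NN)) : SF α KK) T :=
      conv_congr (fun U hU' => Zpart_add j U (hU U hU')) (fun _ _ => rfl)
    rw [e6, ← add_ap, ← sub_eq_zero, ← sub_ap] at e5
    rw [← e5]
    exact sf_ap (by ring) T

theorem main2 (M : α) (S : Finset α) (hM : ∀ s ∈ S, s < M) :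
    (C xx * dl M PP : SF α KK) S =
      ((C xx + C (xx * yy) * Apos) * (1 + C xx * PP) : SF α KK) S := by
  have hCx : ∀ T, GeP 1 ((C xx : SF α KK) T) := by
    intro T; rw [C_ap]; split_ifs
    exacts [GeP.x, GeP.zero _]
  have hCy : ∀ T, LeP (-1) ((C yy : SF α KK) T) := by
    intro T; rw [C_ap]; split_ifs
    exacts [LeP.y, LeP.zero _]
  have hA : ∀ U, (C xx + C yy + C (xx * yy) * (AA + bar AA) : SF α KK) U =
      (C xx + C yy + C (xx * yy) * (Apos + Aneg) : SF α KK) U := by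
    intro U
    rw [add_ap _ (C (xx * yy) * (AA + bar AA)),
      add_ap _ (C (xx * yy) * (Apos + Aneg)), C_mul_ap, C_mul_ap,
      Apart_add, add_ap Apos]
  have U := uniq
    (C xx * dl M PP - (C xx + C (xx * yy) * Apos) * (1 + C xx * PP))
    (C yy * dl M NN - (C yy + C (xx * yy) * Aneg) * (1 + C yy * NN))
    (C yy * NN) (C xx * PP) S ?_ ?_ ?_ ?_ ?_ S le_rfl
  · exact sub_eq_zero.mp U.1
  · intro T _
    rw [sub_ap, C_mul_ap]
    refine GeP.sub ?_ ?_
    · exact (GeP.x.mul (V_Pf_ge _ _)).mono (by norm_num)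
    · refine (GeS_mul (c := 1) T (fun T _ => ?_) (fun T _ => one_P_ge _ T)).mono (by norm_num)
      rw [add_ap, C_mul_ap]
      exact (hCx T).add (((GeP.x.mul GeP.y).mul (Apart_ge T)).mono (by norm_num))
  · intro T _
    rw [sub_ap, C_mul_ap]
    refine LeP.sub ?_ ?_
    · exact (LeP.y.mul (V_Nf_le _ _)).mono (by norm_num)
    · refine (LeS_mul (c := -1) T (fun T _ => ?_) (fun T _ => one_N_le _ T)).mono (by norm_num)
      rw [add_ap, C_mul_ap]
      exact (hCy T).add (((LeP.x.mul LeP.y).mul (Apart_le T)).mono (by norm_num))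
  · rw [C_mul_ap, NN, V_empty, mul_zero]
  · rw [C_mul_ap, PP, V_empty, mul_zero]
  · intro T hT
    have hMT : ∀ s ∈ T, s < M := fun s h => hM s (hT h)
    have e1 := WH_insert lt' M T (fun h => lt_irrefl _ (hMT M h))
    have e3 : ((C xx + C yy) * ((W (fun u => wt xx yy (st lt' (u ++ [M]))) : SF α KK) *
        W (fun v => wt xx yy (st lt' (M :: v)))) : SF α KK) T =
        ((C xx + C yy) * ((1 + C xx * AA) * (1 + C yy * AA)) : SF α KK) T :=
      conv_congr (fun _ _ => rfl) fun U hU' => conv_congr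
        (fun U' hU'' => bef_max M U' fun s hs => hMT s (hU' (hU'' hs)))
        (fun U' hU'' => aft_max M U' fun s hs => hMT s (hU' (hU'' hs)))
    rw [e3, main2_alg, F_fact] at e1
    have e6 : ((C xx + C yy + C (xx * yy) * (AA + bar AA)) *
          ((1 + C xx * PP) * (1 + C yy * NN)) : SF α KK) T =
        ((C xx + C yy + C (xx * yy) * (Apos + Aneg)) *
          ((1 + C xx * PP) * (1 + C yy * NN)) : SF α KK) T :=
      conv_congr (fun U _ => hA U) (fun _ _ => rfl)
    rw [e6, ← PP, ← NN, eq_comm, ← sub_eq_zero, ← sub_ap] at e1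
    rw [← e1]
    exact sf_ap (by ring) T

end
end BF

set_option linter.unusedSectionVars false
namespace BF
open Finset

noncomputable section

/-- specialization -/
def ph : KK →+* Polynomial ℤ := MvPolynomial.eval₂Hom (Int.castRingHom _) ![1, Polynomial.X]

theorem ph_x : ph xx = 1 := by simp [ph, xx]
theorem ph_y : ph yy = Polynomial.X := by simp [ph, yy]

theorem ph_wt (s : List Bool) : ph (wt xx yy s) = Polynomial.X ^ s.count false := by
  induction s with
  | nil => simp [wt]
  | cons e s ih =>
    cases e <;> simp [wt, ih, ph_x, ph_y, pow_succ']

theorem ht_eq (s : List Bool) : ht s = s.count true - s.count false := by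
  induction s with
  | nil => simp [ht]
  | cons e s ih => cases e <;> simp [ht, ih, sg] <;> ring

theorem len_eq (s : List Bool) : s.length = s.count true + s.count false := by
  induction s with
  | nil => simp
  | cons e s ih =>
    rw [List.length_cons, ih]
    cases e <;> simp only [List.count_cons] <;> simp <;> omega

variable {α : Type*} [LinearOrder α]

theorem st_gt (l : List α) (h : l.Nodup) : st gt' l = (st lt' l).map not := by
  induction l with
  | nil => rfl
  | cons a l ih =>
    cases l with
    | nil => rfl
    | cons b l =>
      simp only [st, List.map_cons]
      rw [ih (List.nodup_cons.mp h).2]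
      congr 1
      have hab : a ≠ b := by rintro rfl; simp at h
      simp only [gt', lt']
      rcases lt_or_gt_of_ne hab with h | h <;> simp [h, h.le]

theorem st_lt_reverse (l : List α) (h : l.Nodup) :
    st lt' l.reverse = ((st lt' l).map not).reverse := by
  rw [st_reverse, ← st_gt l h]; rfl

theorem count_map_not (s : List Bool) (b : Bool) : (s.map not).count b = s.count (!b) := by
  induction s with
  | nil => rfl
  | cons e s ih => cases e <;> cases b <;> simp_all

theorem count_rev (l : List α) (h : l.Nodup) (b : Bool) :
    (st lt' l.reverse).count b = (st lt' l).count (!b) := by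
  rw [st_lt_reverse l h, List.count_reverse, count_map_not]

/-- the generating function of ballot words, with empty word -/
def BB (S : Finset α) : Polynomial ℤ := ph ((1 + C xx * PP : SF α KK) S)

theorem BB_empty : BB (∅ : Finset α) = 1 := by
  simp [BB, add_ap, C_mul_ap, PP, V_empty, one_ap]

theorem sum_rev (S : Finset α) (f : List α → Polynomial ℤ) :
    ∑ w ∈ words S, f w = ∑ w ∈ words S, f w.reverse := by
  refine Finset.sum_nbij' List.reverse List.reverse ?_ ?_ ?_ ?_ ?_ <;>
    simp +contextual [mem_words]

theorem ph_Zpos (j : α) (S : Finset α) (hj : j ∉ S) :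
    ph (Zpos j S) = 2 * (if Even S.card then ∑ w ∈ words S,
      Polynomial.X ^ min ((st lt' (j :: w)).count false + 1) ((st lt' (j :: w)).count true)
      else 0) := by
  unfold Zpos Zpart
  split_ifs with h
  · rw [map_mul, map_ofNat]
    congr 1
    rw [sum_add_distrib, map_add, map_sum, map_sum]
    rw [sum_rev S (fun w => ph (if 0 < ht (st lt' (w ++ [j])) + 1 then
      xx * wt xx yy (st lt' (w ++ [j])) else 0)), ← sum_add_distrib]
    refine Finset.sum_congr rfl fun w hw => ?_
    have hw' := mem_words.mp hw
    have hn : (j :: w).Nodup := by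
      rw [List.nodup_cons]
      exact ⟨fun hjw => hj (by rw [← hw'.2]; simpa using hjw), hw'.1⟩
    have e : w.reverse ++ [j] = (j :: w).reverse := by simp
    rw [e, ht_eq, ht_eq, count_rev _ hn, count_rev _ hn]
    simp only [apply_ite ph, map_mul, ph_wt, ph_x, ph_y, map_zero, count_rev _ hn]
    have hl := len_eq (st lt' (j :: w))
    rw [length_st, List.length_cons, len_words hw] at hl
    obtain ⟨m, hm⟩ := h
    simp only [Bool.not_false, Bool.not_true]
    generalize (st lt' (j :: w)).count false = p at *
    generalize (st lt' (j :: w)).count true = q at *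
    rcases lt_or_ge (p + 1) q with h1 | h1
    · rw [if_neg (by omega), if_pos (by omega), min_eq_left (by omega), pow_succ']; ring
    · rw [if_pos (by omega), if_neg (by omega), min_eq_right (by omega)]; ring
  · simp

theorem main1_poly (j : α) (S : Finset α) (hj : j ∉ S) :
    ph (V (r1 j) (Pf xx yy) (insert j S)) + ph (V (r2 j) (Pf xx yy) (insert j S)) =
      2 * ∑ T ∈ S.powerset, (if Even T.card then ∑ w ∈ words T,
      Polynomial.X ^ min ((st lt' (j :: w)).count false + 1) ((st lt' (j :: w)).count true)
      else 0) * BB (S \ T) := by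
  have h := congrArg ph (main1 j S hj)
  rw [C_mul_ap, add_ap, map_mul, ph_x, one_mul, map_add] at h
  refine Eq.trans h ?_
  rw [mul_ap, map_sum, mul_sum]
  refine Finset.sum_congr rfl fun T hT => ?_
  rw [map_mul, ph_Zpos j T (fun h => hj (mem_powerset.mp hT h)), mul_assoc]
  rfl

theorem ph_Apos (S : Finset α) :
    ph ((C xx + C (xx * yy) * Apos : SF α KK) S) = (if Even S.card then ∑ w ∈ words S,
      (if w = [] then 1 else
        Polynomial.X ^ min ((st lt' w).count false + 1) ((st lt' w).count true + 1))
      else 0) := by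
  rw [add_ap, C_mul_ap, C_ap]
  unfold Apos Apart
  by_cases hS : S = ∅
  · subst hS; simp [V_empty, words_empty, ph_x]
  rw [if_neg hS, zero_add, map_mul, map_mul, ph_x, ph_y, one_mul]
  split_ifs with h
  · rw [map_mul, map_ofNat, two_mul]
    simp only [V, W_ap]
    rw [map_sum]
    nth_rw 2 [sum_rev]
    rw [← sum_add_distrib, mul_sum]
    refine Finset.sum_congr rfl fun w hw => ?_
    have hw' := mem_words.mp hw
    have h0 : w ≠ [] := by rintro rfl; simp at hw'; exact hS hw'.symm
    have h0' : w.reverse ≠ [] := by simpa using h0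
    simp only [h0, h0', if_false, ht_eq, count_rev _ hw'.1]
    simp only [apply_ite ph, map_mul, ph_wt, ph_x, ph_y, map_zero, count_rev _ hw'.1]
    have hl := len_eq (st lt' w)
    rw [length_st, len_words hw] at hl
    have hc : 0 < S.card := card_pos.mpr (nonempty_iff_ne_empty.mpr hS)
    obtain ⟨m, hm⟩ := h
    simp only [Bool.not_false, Bool.not_true]
    generalize (st lt' w).count false = p at *
    generalize (st lt' w).count true = q at *
    rcases lt_or_ge p q with h1 | h1
    · rw [if_neg (by omega : ¬ (0 : ℤ) < p - q), if_pos (by omega), min_eq_left (by omega),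
        pow_succ']; ring
    · rw [if_neg (by omega : ¬ (0 : ℤ) < q - p), if_pos (by omega), min_eq_right (by omega),
        pow_succ']; ring
  · simp

theorem main2_poly (M : α) (S : Finset α) (hM : ∀ s ∈ S, s < M) :
    BB (insert M S) = ∑ T ∈ S.powerset, (if Even T.card then ∑ w ∈ words T,
      (if w = [] then 1 else
        Polynomial.X ^ min ((st lt' w).count false + 1) ((st lt' w).count true + 1))
      else 0) * BB (S \ T) := by
  have h := congrArg ph (main2 M S hM)
  have h1 : BB (insert M S) = ph ((C xx * dl M PP : SF α KK) S) := by
    rw [BB, add_ap, one_ap, if_neg (insert_ne_empty M S), zero_add, C_mul_ap, C_mul_ap]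
    rfl
  rw [h1, h, mul_ap, map_sum]
  refine Finset.sum_congr rfl fun T hT => ?_
  rw [map_mul, ph_Apos]
  rfl

end
end BF

set_option linter.unusedSectionVars false
namespace BF
open Finset

section cyc
variable {α : Type*} [DecidableEq α]

/-- consecutive letters are mapped by `π` -/
def Ch (π : Equiv.Perm α) (l : List α) : Prop := List.IsChain (fun x y => π x = y) l

theorem Ch_pre (π : Equiv.Perm α) (a : α) (u v : List α) (hu : Ch π (a :: u))
    (hv : Ch π (a :: v)) : u <+: v ∨ v <+: u := by
  induction u generalizing a v with
  | nil => left; simp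
  | cons b u ih =>
    cases v with
    | nil => right; simp
    | cons c v =>
      unfold Ch at hu hv
      rw [List.isChain_cons_cons] at hu hv
      obtain rfl : b = c := hu.1.symm.trans hv.1
      rcases ih b v hu.2 hv.2 with h | h
      · left; exact (List.prefix_cons_inj b).mpr h
      · right; exact (List.prefix_cons_inj b).mpr h

theorem Ch_uniq (π : Equiv.Perm α) (a : α) (u v : List α) (hu : Ch π (a :: (u ++ [a])))
    (hv : Ch π (a :: (v ++ [a]))) (hau : a ∉ u) (hav : a ∉ v) : u = v := by
  have key : ∀ u v : List α, a ∉ v → u ++ [a] <+: v ++ [a] → u = v := by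
    intro u v hav h
    obtain ⟨t, ht⟩ := h
    rcases List.eq_nil_or_concat t with rfl | ⟨t', z, rfl⟩
    · simpa using ht
    · rw [List.concat_eq_append, ← List.append_assoc] at ht
      have := (List.append_inj' ht rfl).1
      exact absurd (by rw [← this]; simp) hav
  rcases Ch_pre π a _ _ hu hv with h | h
  · exact key u v hav h
  · exact (key v u hau h).symm

theorem Ch_formPerm (a : α) (l : List α) (h : (a :: l).Nodup) :
    Ch (a :: l).formPerm (a :: (l ++ [a])) := by
  unfold Ch
  rw [List.isChain_iff_getElem]
  intro i hi
  have hi' : i < (a :: l).length := by simp at hi ⊢; omega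
  have e : (a :: (l ++ [a])) = (a :: l) ++ [a] := by simp
  have := List.formPerm_apply_getElem (a :: l) h i hi'
  have e1 : (a :: (l ++ [a]))[i] = (a :: l)[i] := by
    simp only [e]; exact List.getElem_append_left hi'
  rw [e1, this]
  by_cases h2 : i + 1 < (a :: l).length
  · simp only [e]
    rw [List.getElem_append_left h2]
    congr 1
    exact Nat.mod_eq_of_lt h2
  · have h3 : i + 1 = (a :: l).length := by omega
    have h4 : (i + 1) % (a :: l).length = 0 := by rw [h3, Nat.mod_self]
    simp only [e, h4]
    rw [List.getElem_append_right (by omega)]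
    simp

theorem Ch_congr {π σ : Equiv.Perm α} (l : List α) (c : α) (h : ∀ x ∈ l, π x = σ x)
    (hc : Ch π (l ++ [c])) : Ch σ (l ++ [c]) := by
  induction l with
  | nil => simp [Ch]
  | cons a l ih =>
    cases l with
    | nil =>
      simp only [Ch, List.cons_append, List.nil_append, List.isChain_cons_cons] at hc ⊢
      exact ⟨by rw [← h a (by simp)]; exact hc.1, by simp⟩
    | cons b l =>
      simp only [Ch, List.cons_append, List.isChain_cons_cons] at hc ⊢
      refine ⟨by rw [← h a (by simp)]; exact hc.1, ?_⟩
      exact ih (fun x hx => h x (by simp [hx])) hc.2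

variable [Fintype α]

theorem exists_list (π : Equiv.Perm α) (a : α) :
    ∃ l, (a :: l).Nodup ∧ ∀ x ∈ a :: l, π x = (a :: l).formPerm x := by
  by_cases h : a ∈ π.support
  · have h0 := Equiv.Perm.toList_getElem_zero π a h
    have hn := Equiv.Perm.nodup_toList π a
    have hf := Equiv.Perm.formPerm_toList π a
    have hm : ∀ x ∈ π.toList a, π.SameCycle a x := fun x hx => (Equiv.Perm.mem_toList_iff.mp hx).1
    have hne : π.toList a ≠ [] := by
      rw [Ne, Equiv.Perm.toList_eq_nil_iff]; simpa using h
    obtain ⟨b, l, hl⟩ := List.exists_cons_of_ne_nil hne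
    simp only [hl] at h0 hn hf hm
    simp at h0
    subst h0
    refine ⟨l, hn, fun x hx => ?_⟩
    rw [hf, Equiv.Perm.cycleOf_apply, if_pos (hm x hx)]
  · refine ⟨[], by simp, ?_⟩
    simpa using h

theorem mul_fix {l : List α} {σ : Equiv.Perm α} (h : ∀ x ∈ l, σ x = x) :
    ∀ x ∈ l, (l.formPerm * σ) x = l.formPerm x := by
  intro x hx; rw [Equiv.Perm.mul_apply, h x hx]

theorem cycle_sum {A : Type*} [AddCommMonoid A] (a : α) (q : List α) (S : Finset α)
    (hn : (a :: q).Nodup) (hS : (a :: q).toFinset ⊆ S) (f : Equiv.Perm α → A)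
    [DecidablePred fun π => Ch π (a :: q)] :
    ∑ π ∈ univ.filter (fun π : Equiv.Perm α => π.support ⊆ S ∧ Ch π (a :: q)), f π =
      ∑ T ∈ (S \ (a :: q).toFinset).powerset, ∑ w ∈ words T,
        ∑ σ ∈ univ.filter (fun σ : Equiv.Perm α => σ.support ⊆ (S \ (a :: q).toFinset) \ T),
          f ((a :: (q ++ w)).formPerm * σ) := by
  simp only [Finset.sum_sigma']
  symm
  have fixes : ∀ (w : List α) (T : Finset α) (σ : Equiv.Perm α), w ∈ words T →
      σ.support ⊆ (S \ (a :: q).toFinset) \ T → ∀ x ∈ a :: (q ++ w), σ x = x := by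
    intro w T σ hw hσ x hx
    rw [mem_words] at hw
    by_contra hne
    have h1 := hσ (Equiv.Perm.mem_support.mpr hne)
    rw [← hw.2] at h1
    simp only [mem_sdiff, List.mem_toFinset] at h1
    rw [← List.cons_append, List.mem_append] at hx
    rcases hx with h | h
    · exact h1.1.2 h
    · exact h1.2 h
  have nod : ∀ (w : List α) (T : Finset α), w ∈ words T → T ⊆ S \ (a :: q).toFinset →
      (a :: (q ++ w)).Nodup := by
    intro w T hw hT
    rw [mem_words] at hw
    rw [← List.cons_append, List.nodup_append']
    refine ⟨hn, hw.1, ?_⟩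
    intro x hx hxw
    have : x ∈ T := by rw [← hw.2]; simpa using hxw
    have := hT this
    rw [mem_sdiff, List.mem_toFinset] at this
    exact this.2 hx
  refine Finset.sum_bij (fun p _ => (a :: (q ++ p.2.1)).formPerm * p.2.2) ?_ ?_ ?_ ?_
  · rintro ⟨T, w, σ⟩ hp
    simp only [mem_sigma, mem_powerset, mem_filter, mem_univ, true_and] at hp ⊢
    obtain ⟨hT, hw, hσ⟩ := hp
    have hf := fixes w T σ hw hσ
    have hnod := nod w T hw hT
    constructor
    · intro x hx
      by_contra hxS
      rw [Equiv.Perm.mem_support, Equiv.Perm.mul_apply] at hx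
      apply hx
      have h1 : σ x = x := by
        by_contra hne
        have := hσ (Equiv.Perm.mem_support.mpr hne)
        rw [mem_sdiff, mem_sdiff] at this
        exact hxS this.1.1
      rw [h1]
      apply List.formPerm_apply_of_notMem
      rw [← List.cons_append, List.mem_append]
      rintro (h | h)
      · exact hxS (hS (by simpa using h))
      · have : x ∈ T := by rw [← (mem_words.mp hw).2]; simpa using h
        exact hxS (mem_sdiff.mp (hT this)).1
    · have h1 := Ch_formPerm a (q ++ w) hnod
      have h2 : Ch ((a :: (q ++ w)).formPerm * σ) ((a :: (q ++ w)) ++ [a]) :=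
        Ch_congr _ _ (fun x hx => (mul_fix hf x hx).symm) h1
      unfold Ch at h2 ⊢
      have e : (a :: (q ++ w)) ++ [a] = (a :: q) ++ (w ++ [a]) := by simp
      rw [e, List.isChain_append] at h2
      exact h2.1
  · rintro ⟨T, w, σ⟩ hp ⟨T', w', σ'⟩ hp' heq
    simp only [mem_sigma, mem_powerset, mem_filter, mem_univ, true_and] at hp hp' heq
    obtain ⟨hT, hw, hσ⟩ := hp
    obtain ⟨hT', hw', hσ'⟩ := hp'
    have h2 : Ch ((a :: (q ++ w)).formPerm * σ) ((a :: (q ++ w)) ++ [a]) :=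
      Ch_congr _ _ (fun x hx => (mul_fix (fixes w T σ hw hσ) x hx).symm)
        (Ch_formPerm a (q ++ w) (nod w T hw hT))
    have h2' : Ch ((a :: (q ++ w')).formPerm * σ') ((a :: (q ++ w')) ++ [a]) :=
      Ch_congr _ _ (fun x hx => (mul_fix (fixes w' T' σ' hw' hσ') x hx).symm)
        (Ch_formPerm a (q ++ w') (nod w' T' hw' hT'))
    rw [← heq] at h2'
    have h3 := Ch_uniq _ a _ _ h2 h2' (List.nodup_cons.mp (nod w T hw hT)).1
      (List.nodup_cons.mp (nod w' T' hw' hT')).1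
    have h4 : w = w' := List.append_cancel_left h3
    subst h4
    obtain rfl : T = T' := (mem_words.mp hw).2.symm.trans (mem_words.mp hw').2
    rw [mul_left_cancel heq]
  · intro π hπ
    simp only [mem_filter, mem_univ, true_and] at hπ
    obtain ⟨hs, hc⟩ := hπ
    obtain ⟨l, hl, hπl⟩ := exists_list π a
    have hcl : Ch π ((a :: l) ++ [a]) :=
      Ch_congr _ _ (fun x hx => (hπl x hx).symm) (Ch_formPerm a l hl)
    have hpre : ∃ w, l = q ++ w := by
      rcases Ch_pre π a q (l ++ [a]) hc hcl with h | h
      · obtain ⟨t, ht⟩ := h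
        rcases List.eq_nil_or_concat t with rfl | ⟨t', z, rfl⟩
        · exfalso
          rw [List.append_nil] at ht
          rw [ht] at hn
          simp at hn
        · rw [List.concat_eq_append, ← List.append_assoc] at ht
          exact ⟨t', (List.append_inj' ht rfl).1.symm⟩
      · exfalso
        have := h.subset (show a ∈ l ++ [a] by simp)
        exact (List.nodup_cons.mp hn).1 this
    obtain ⟨w, rfl⟩ := hpre
    have hlS : ∀ x ∈ a :: (q ++ w), x ∈ S := by
      intro x hx
      by_cases h2 : 2 ≤ (a :: (q ++ w)).length
      · have := (List.formPerm_apply_mem_ne_self_iff _ hl x hx).mpr h2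
        rw [← hπl x hx] at this
        exact hs (Equiv.Perm.mem_support.mpr this)
      · have : q ++ w = [] := by
          rw [← List.length_eq_zero_iff]; simp only [List.length_cons] at h2; omega
        rw [this, List.mem_singleton] at hx
        subst hx; exact hS (by simp)
    have hl' := hl
    rw [← List.cons_append, List.nodup_append'] at hl'
    refine ⟨⟨w.toFinset, w, (a :: (q ++ w)).formPerm⁻¹ * π⟩, ?_, ?_⟩
    · simp only [mem_sigma, mem_powerset, mem_filter, mem_univ, true_and]
      refine ⟨?_, mem_words.mpr ⟨hl'.2.1, rfl⟩, ?_⟩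
      · intro x hx
        rw [List.mem_toFinset] at hx
        rw [mem_sdiff, List.mem_toFinset]
        exact ⟨hlS x (by simp [hx]), fun h => hl'.2.2 h hx⟩
      · intro x hx
        rw [Equiv.Perm.mem_support, Equiv.Perm.mul_apply] at hx
        have h1 : x ∉ a :: (q ++ w) := by
          intro h
          apply hx
          rw [hπl x h]; simp
        have h2 : x ∈ S := by
          by_contra hxS
          apply hx
          have : π x = x := by
            by_contra hne; exact hxS (hs (Equiv.Perm.mem_support.mpr hne))
          rw [this, Equiv.Perm.inv_eq_iff_eq]
          exact (List.formPerm_apply_of_notMem h1).symm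
        rw [← List.cons_append, List.mem_append, not_or] at h1
        simp only [mem_sdiff, List.mem_toFinset]
        exact ⟨⟨h2, h1.1⟩, h1.2⟩
    · simp
  · intro p _; rfl

end cyc
end BF

set_option linter.unusedSectionVars false
namespace BF
open Finset

noncomputable section
variable {n : ℕ}

/-- all cycles odd -/
def OddP (π : Equiv.Perm (Fin n)) : Prop := ∀ m ∈ π.cycleType, Odd m

instance : DecidablePred (OddP (n := n)) := fun _ => Classical.dec _

/-- weight of a cycle -/
def cw (l : List (Fin n)) : ℕ := min (cdes l.formPerm) (casc l.formPerm)

theorem disj_of {l : List (Fin n)} {σ : Equiv.Perm (Fin n)} (h : ∀ x ∈ l, σ x = x) :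
    l.formPerm.Disjoint σ := by
  intro x
  by_cases hx : x ∈ l
  · right; exact h x hx
  · left; exact List.formPerm_apply_of_notMem hx

theorem odd_mul {a : Fin n} {l : List (Fin n)} {σ : Equiv.Perm (Fin n)} (hl : (a :: l).Nodup)
    (h : ∀ x ∈ a :: l, σ x = x) :
    OddP ((a :: l).formPerm * σ) ↔ Odd (a :: l).length ∧ OddP σ := by
  unfold OddP
  rw [(disj_of h).cycleType_mul]
  cases l with
  | nil => simp
  | cons b l =>
    rw [(List.isCycle_formPerm hl (by simp)).cycleType,
      List.support_formPerm_of_nodup _ hl (by simp), List.toFinset_card_of_nodup hl]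
    simp only [Multiset.mem_add, Multiset.mem_singleton]
    constructor
    · intro h; exact ⟨h _ (Or.inl rfl), fun m hm => h m (Or.inr hm)⟩
    · rintro ⟨h1, h2⟩ m (rfl | hm)
      · exact h1
      · exact h2 m hm

theorem cdes_one : cdes (1 : Equiv.Perm (Fin n)) = 0 := by simp [cdes]

theorem Mstat_mul {a : Fin n} {l : List (Fin n)} {σ : Equiv.Perm (Fin n)} (hl : (a :: l).Nodup)
    (h : ∀ x ∈ a :: l, σ x = x) :
    Mstat ((a :: l).formPerm * σ) = cw (a :: l) + Mstat σ := by
  unfold Mstat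
  rw [(disj_of h).cycleFactorsFinset_mul_eq_union,
    Finset.sum_union (disj_of h).disjoint_cycleFactorsFinset]
  congr 1
  cases l with
  | nil => simp [cw, cdes_one]
  | cons b l =>
    rw [Equiv.Perm.cycleFactorsFinset_eq_singleton_self_iff.mpr
      (List.isCycle_formPerm hl (by simp)), Finset.sum_singleton]
    rfl

theorem count_st (π : Equiv.Perm (Fin n)) (l : List (Fin n)) (c : Fin n) (h : Ch π (l ++ [c]))
    (e : Bool) :
    (st lt' (l ++ [c])).count e = (l.filter (fun x => lt' x (π x) == e)).length := by
  induction l with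
  | nil => simp [st]
  | cons a l ih =>
    have key : ∀ b m, l ++ [c] = b :: m → (st lt' (a :: l ++ [c])).count e =
        ((a :: l).filter (fun x => lt' x (π x) == e)).length := by
      intro b m hm
      rw [List.cons_append, hm] at h ⊢
      unfold Ch at h
      rw [List.isChain_cons_cons] at h
      rw [← hm] at h
      have := ih h.2
      rw [hm] at this
      simp only [st, List.count_cons, List.filter_cons, this, h.1]
      split_ifs <;> simp
    cases l with
    | nil => exact key c [] rfl
    | cons b l => exact key b (l ++ [c]) rfl

theorem cw_eq (a : Fin n) (l : List (Fin n)) (hl : (a :: l).Nodup) (h0 : l ≠ []) :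
    cw (a :: l) = min ((st lt' (a :: l ++ [a])).count false)
      ((st lt' (a :: l ++ [a])).count true) := by
  have hch := Ch_formPerm a l hl
  have h2 : 2 ≤ (a :: l).length := by
    rw [List.length_cons]; have := List.length_pos_of_ne_nil h0; omega
  rw [count_st _ (a :: l) a hch, count_st _ (a :: l) a hch, cw]
  have hne : ∀ x ∈ a :: l, (a :: l).formPerm x ≠ x := fun x hx =>
    (List.formPerm_apply_mem_ne_self_iff _ hl x hx).mpr h2
  have hfix : ∀ x, x ∉ a :: l → (a :: l).formPerm x = x := fun x hx =>
    List.formPerm_apply_of_notMem hx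
  generalize (a :: l).formPerm = π at *
  congr 1
  · rw [cdes, ← List.toFinset_card_of_nodup (hl.filter _)]
    congr 1
    ext x
    simp only [mem_filter, mem_univ, true_and, List.mem_toFinset, List.mem_filter, lt',
      beq_false, Bool.not_eq_true', decide_eq_false_iff_not, not_lt]
    constructor
    · intro h
      refine ⟨?_, h.le⟩
      by_contra hx; rw [hfix x hx] at h; exact lt_irrefl _ h
    · rintro ⟨h1, h2⟩; exact lt_of_le_of_ne h2 (hne x h1)
  · rw [casc, ← List.toFinset_card_of_nodup (hl.filter _)]
    congr 1
    ext x
    simp only [mem_filter, mem_univ, true_and, List.mem_toFinset, List.mem_filter, lt',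
      beq_true, decide_eq_true_eq]
    constructor
    · intro h
      refine ⟨?_, h⟩
      by_contra hx; rw [hfix x hx] at h; exact lt_irrefl _ h
    · rintro ⟨h1, h2⟩; exact h2

/-- generating function of odd permutations supported in `S` -/
def OO (S : Finset (Fin n)) : Polynomial ℤ :=
  ∑ π ∈ univ.filter (fun π : Equiv.Perm (Fin n) => π.support ⊆ S),
    if OddP π then Polynomial.X ^ Mstat π else 0

theorem odd_sum (a : Fin n) (q : List (Fin n)) (S : Finset (Fin n))
    (hn : (a :: q).Nodup) (hS : (a :: q).toFinset ⊆ S)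
    [DecidablePred fun π => Ch π (a :: q)] :
    ∑ π ∈ univ.filter (fun π : Equiv.Perm (Fin n) => π.support ⊆ S ∧ Ch π (a :: q)),
      (if OddP π then (Polynomial.X : Polynomial ℤ) ^ Mstat π else 0) =
    ∑ T ∈ (S \ (a :: q).toFinset).powerset, (∑ w ∈ words T,
      if Odd (q.length + 1 + T.card) then Polynomial.X ^ cw (a :: (q ++ w)) else 0) *
        OO ((S \ (a :: q).toFinset) \ T) := by
  rw [cycle_sum a q S hn hS]
  refine Finset.sum_congr rfl fun T hT => ?_
  rw [Finset.sum_mul]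
  refine Finset.sum_congr rfl fun w hw => ?_
  rw [OO, Finset.mul_sum]
  refine Finset.sum_congr rfl fun σ hσ => ?_
  rw [mem_powerset] at hT
  have hw' := mem_words.mp hw
  rw [mem_filter] at hσ
  have hfix : ∀ x ∈ a :: (q ++ w), σ x = x := by
    intro x hx
    by_contra hne
    have h1 := hσ.2 (Equiv.Perm.mem_support.mpr hne)
    rw [← hw'.2] at h1
    simp only [mem_sdiff, List.mem_toFinset] at h1
    rw [← List.cons_append, List.mem_append] at hx
    rcases hx with h | h
    · exact h1.1.2 h
    · exact h1.2 h
  have hnod : (a :: (q ++ w)).Nodup := by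
    rw [← List.cons_append, List.nodup_append']
    refine ⟨hn, hw'.1, ?_⟩
    intro x hx hxw
    have : x ∈ T := by rw [← hw'.2]; simpa using hxw
    have := hT this
    rw [mem_sdiff, List.mem_toFinset] at this
    exact this.2 hx
  have hlen : (a :: (q ++ w)).length = q.length + 1 + T.card := by
    simp [len_words hw]; omega
  rw [Mstat_mul hnod hfix]
  simp only [odd_mul hnod hfix, hlen]
  by_cases h1 : Odd (q.length + 1 + T.card) <;> by_cases h2 : OddP σ <;> simp [h1, h2, pow_add]

theorem cw_max (M : Fin n) (w : List (Fin n)) (hw : w.Nodup) (hM : ∀ x ∈ w, x < M) (h0 : w ≠ []) :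
    cw (M :: w) = min ((st lt' w).count false + 1) ((st lt' w).count true + 1) := by
  rw [cw_eq M w (List.nodup_cons.mpr ⟨fun h => lt_irrefl _ (hM M h), hw⟩) h0]
  obtain ⟨b, m, rfl⟩ := List.exists_cons_of_ne_nil h0
  have hb := hM b (by simp)
  have e1 : st lt' (M :: (b :: m) ++ [M]) = lt' M b :: st lt' ((b :: m) ++ [M]) := rfl
  obtain ⟨m', c, hc⟩ : ∃ m' c, b :: m = m' ++ [c] := by
    rcases List.eq_nil_or_concat (b :: m) with h | ⟨m', c, h⟩
    · simp at h
    · exact ⟨m', c, by rw [h, List.concat_eq_append]⟩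
  have hcM := hM c (by rw [hc]; simp)
  have e2 : st lt' ((b :: m) ++ [M]) = st lt' (b :: m) ++ [true] := by
    rw [hc, List.append_assoc]
    have := st_snoc2 lt' m' c M
    rw [show lt' c M = true by simpa [lt'] using hcM] at this
    exact this
  rw [e1, e2, show lt' M b = false by simpa [lt'] using hb.le]
  simp

theorem OO_eq_BB (S : Finset (Fin n)) : OO S = BB S := by
  induction S using Finset.strongInduction with
  | H S ih =>
    by_cases h : S = ∅
    · subst h
      rw [BB_empty, OO]
      have : (univ.filter fun π : Equiv.Perm (Fin n) => π.support ⊆ ∅) = {1} := by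
        ext π; simp
      rw [this, Finset.sum_singleton, if_pos (by simp [OddP])]
      simp [Mstat]
    · have hne := nonempty_iff_ne_empty.mpr h
      set M := S.max' hne with hMdef
      have hMS : M ∈ S := S.max'_mem hne
      have hlt : ∀ s ∈ S.erase M, s < M := by
        intro s hs
        rw [mem_erase] at hs
        exact lt_of_le_of_ne (S.le_max' s hs.2) hs.1
      classical
      have h1 := odd_sum M [] S (by simp) (by simpa using hMS)
      have h2 := main2_poly M (S.erase M) hlt
      rw [insert_erase hMS] at h2
      have e : S \ [M].toFinset = S.erase M := by
        ext x; simp [and_comm]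
      rw [e] at h1
      have e1 : (univ.filter fun π : Equiv.Perm (Fin n) => π.support ⊆ S ∧ Ch π [M]) =
          univ.filter fun π : Equiv.Perm (Fin n) => π.support ⊆ S := by
        ext π; simp [Ch]
      rw [e1] at h1
      rw [OO, h1, h2]
      refine Finset.sum_congr rfl fun T hT => ?_
      rw [mem_powerset] at hT
      rw [ih (S.erase M \ T) ((sdiff_subset).trans_ssubset (erase_ssubset hMS))]
      congr 1
      have hodd : Odd (([] : List (Fin n)).length + 1 + T.card) ↔ Even T.card := by
        simp [Nat.odd_add, Nat.odd_add_one]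
      simp only [hodd]
      split_ifs with he
      · refine Finset.sum_congr rfl fun w hw => ?_
        have hw' := mem_words.mp hw
        split_ifs with h0
        · subst h0; simp [cw, cdes_one]
        · rw [List.nil_append, cw_max M w hw'.1 _ h0]
          intro x hx
          exact hlt x (hT (by rw [← hw'.2]; simpa using hx))
      · simp

end
end BF

set_option linter.unusedSectionVars false
namespace BF
open Finset

section aux
variable {α : Type*} [DecidableEq α]

theorem st_cons_congr {r r' : α → α → Bool} (c c' : α) (v : List α)
    (h : ∀ a ∈ v, ∀ b ∈ v, r a b = r' a b) (hc : ∀ a ∈ v, r c a = r' c' a) :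
    st r (c :: v) = st r' (c' :: v) := by
  cases v with
  | nil => rfl
  | cons a v =>
    simp only [st]
    rw [hc a (by simp), st_congr (a :: v) h]

theorem st_snoc_congr {r r' : α → α → Bool} (c c' : α) (v : List α)
    (h : ∀ a ∈ v, ∀ b ∈ v, r a b = r' a b) (hc : ∀ a ∈ v, r a c = r' a c') :
    st r (v ++ [c]) = st r' (v ++ [c']) := by
  have e : ∀ c, v ++ [c] = (c :: v.reverse).reverse := by intro c; simp
  rw [e, e, st_reverse, st_reverse]
  congr 1
  refine st_cons_congr _ _ _ (fun a ha b hb => ?_) (fun a ha => ?_)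
  · exact h b (by simpa using hb) a (by simpa using ha)
  · exact hc a (by simpa using ha)

theorem mn_block (s t : List Bool) : mn (s ++ true :: false :: t) = mn (s ++ t) := by
  induction s with
  | nil =>
    have := mn_le t
    simp only [List.nil_append, mn, sg]
    simp only [if_true, Bool.false_eq_true, if_false]
    omega
  | cons e s ih => simp only [List.cons_append, mn, ih]

theorem le_mn (s : List Bool) (c : ℤ) : c ≤ mn s ↔ ∀ k, c ≤ ht (s.take k) := by
  induction s generalizing c with
  | nil => simp [mn, ht]
  | cons e s ih =>
    have h1 : c ≤ mn (e :: s) ↔ c ≤ 0 ∧ c - sg e ≤ mn s := by simp only [mn]; omega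
    rw [h1, ih]
    constructor
    · rintro ⟨h0, h⟩ k
      cases k with
      | zero => simpa [ht] using h0
      | succ k => have := h k; simp only [List.take_succ_cons, ht]; omega
    · intro h
      refine ⟨by simpa [ht] using h 0, fun k => ?_⟩
      have := h (k + 1); simp only [List.take_succ_cons, ht] at this; omega

theorem countP_range (m : ℕ) (p : ℕ → Prop) [DecidablePred p] (q : ℕ → Bool)
    (h : ∀ i < m, q i = decide (p i)) :
    (List.range m).countP q = ((range m).filter p).card := by
  induction m with
  | zero => simp
  | succ m ih =>
    rw [List.range_succ, List.countP_append, ih (fun i hi => h i (by omega)), range_add_one,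
      filter_insert]
    by_cases hp : p m
    · rw [if_pos hp, card_insert_of_notMem (by simp)]
      simp [h m (by omega), hp]
    · rw [if_neg hp]; simp [h m (by omega), hp]

end aux

noncomputable section
variable {n : ℕ}

theorem st_ofFn (π : Equiv.Perm (Fin n)) :
    st lt' (List.ofFn π) =
      (List.range (n - 1)).map (fun i => decide (permWord n π i < permWord n π (i + 1))) := by
  have key : ∀ (l : List (Fin n)), st lt' l = (List.range (l.length - 1)).map
      (fun i => decide ((l[i]?.elim 0 (fun x => x.val + 1)) < (l[i+1]?.elim 0 fun x => x.val + 1))) := by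
    intro l
    induction l with
    | nil => rfl
    | cons a l ih =>
      cases l with
      | nil => rfl
      | cons b l =>
        have : (a :: b :: l).length - 1 = ((b :: l).length - 1) + 1 := by simp
        rw [this, List.range_succ_eq_map, List.map_cons, List.map_map]
        simp only [st]
        rw [ih]
        congr 1
        simp [lt']
  rw [key, List.length_ofFn]
  refine List.map_congr_left fun i hi => ?_
  rw [List.mem_range] at hi
  have h1 : i < n := by omega
  have h2 : i + 1 < n := by omega
  simp [permWord, h1, h2]

theorem permWord_ne (π : Equiv.Perm (Fin n)) {i : ℕ} (hi : i + 1 < n) :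
    permWord n π i ≠ permWord n π (i + 1) := by
  have h1 : i < n := by omega
  simp only [permWord, h1, hi, dif_pos]
  intro h
  have h2 := π.injective (Fin.ext (Nat.succ_injective h))
  simp at h2

theorem take_count (π : Equiv.Perm (Fin n)) (k : ℕ) :
    ((st lt' (List.ofFn π)).take k).count false = ((range (min k (n - 1))).filter
      (fun i => permWord n π (i + 1) < permWord n π i)).card ∧
    ((st lt' (List.ofFn π)).take k).count true = ((range (min k (n - 1))).filter
      (fun i => permWord n π i < permWord n π (i + 1))).card := by
  rw [st_ofFn, ← List.map_take, List.take_range, List.count, List.count, List.countP_map,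
    List.countP_map]
  constructor
  · refine countP_range _ _ _ fun i hi => ?_
    have := permWord_ne π (i := i) (by omega)
    simp only [Function.comp, beq_false]
    rcases lt_or_gt_of_ne this with h | h <;> simp [h, h.le]
  · refine countP_range _ _ _ fun i hi => ?_
    simp

theorem desNum_eq (π : Equiv.Perm (Fin n)) :
    desNum n π = (st lt' (List.ofFn π)).count false := by
  have := (take_count π (n - 1)).1
  rw [List.take_of_length_le (by simp [length_st]), min_self] at this
  rw [this, desNum]

theorem isBallot_iff (π : Equiv.Perm (Fin n)) :
    IsBallot n π ↔ 0 ≤ mn (st lt' (List.ofFn π)) := by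
  rw [le_mn]
  simp only [ht_eq, (take_count π _).1, (take_count π _).2]
  unfold IsBallot
  constructor
  · intro h k
    by_cases hn : n = 0
    · subst hn; simp
    have := h (min k (n - 1) + 1) (by omega)
    rw [Nat.add_sub_cancel] at this
    omega
  · intro h i hi
    have := h (i - 1)
    rw [min_eq_left (by omega)] at this
    omega

theorem hasFactor_iff (π : Equiv.Perm (Fin n)) (a b c : Fin n) :
    HasFactor n π (a + 1) (b + 1) (c + 1) ↔ [a, b, c] <:+: List.ofFn π := by
  unfold HasFactor
  constructor
  · rintro ⟨k, hk, h1, h2, h3⟩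
    have e1 : k < n := by omega
    have e2 : k + 1 < n := by omega
    simp only [permWord, e1, e2, hk, dif_pos] at h1 h2 h3
    have h1 : π ⟨k, e1⟩ = a := Fin.ext (by omega)
    have h2 : π ⟨k + 1, e2⟩ = b := Fin.ext (by omega)
    have h3 : π ⟨k + 2, hk⟩ = c := Fin.ext (by omega)
    refine ⟨(List.ofFn π).take k, (List.ofFn π).drop (k + 3), ?_⟩
    have hl : (List.ofFn π).length = n := by simp
    conv_rhs => rw [← List.take_append_drop k (List.ofFn π)]
    rw [List.append_assoc]
    congr 1
    rw [List.drop_eq_getElem_cons (by omega : k < (List.ofFn π).length),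
      List.drop_eq_getElem_cons (by omega : k + 1 < (List.ofFn π).length),
      List.drop_eq_getElem_cons (by omega : k + 1 + 1 < (List.ofFn π).length)]
    simp [h1, h2, h3]
  · rintro ⟨u, v, h⟩
    have hl : (u ++ [a, b, c] ++ v).length = n := by rw [h]; simp
    simp at hl
    have e0 : u.length < n := by omega
    have e1 : u.length + 1 < n := by omega
    have e2 : u.length + 2 < n := by omega
    have g : ∀ i (hi : i < n), π ⟨i, hi⟩ = (u ++ [a, b, c] ++ v)[i]'(by simp; omega) := by
      intro i hi
      simp only [h]; simp
    refine ⟨u.length, by omega, ?_, ?_, ?_⟩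
    · simp only [permWord, e0, dif_pos, g]; simp
    · simp only [permWord, e1, dif_pos, g]; simp
    · simp only [permWord, e2, dif_pos, g]; simp

theorem sum_perm_words {A : Type*} [AddCommMonoid A] (f : List (Fin n) → A) :
    ∑ π : Equiv.Perm (Fin n), f (List.ofFn π) = ∑ w ∈ words (univ : Finset (Fin n)), f w := by
  refine Finset.sum_bij (fun π _ => List.ofFn π) ?_ ?_ ?_ ?_
  · intro π _
    rw [mem_words]
    refine ⟨List.nodup_ofFn.mpr π.injective, ?_⟩
    ext x
    simp [List.mem_ofFn]
    exact π.surjective x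
  · intro π _ σ _ h
    exact Equiv.coe_fn_injective (List.ofFn_injective h)
  · intro w hw
    have hl : w.length = n := by rw [len_words hw]; simp
    rw [mem_words] at hw
    have hinj : Function.Injective (fun i : Fin n => w.get (Fin.cast hl.symm i)) :=
      (List.nodup_iff_injective_get.mp hw.1).comp (Fin.cast_injective _)
    refine ⟨Equiv.ofBijective _ (Finite.injective_iff_bijective.mp hinj), by simp, ?_⟩
    apply List.ext_getElem
    · simp [hl]
    · intro i h1 h2
      simp
  · intro π _; rfl

theorem coeff_card (Q : Equiv.Perm (Fin n) → Prop) [DecidablePred Q]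
    (f : Equiv.Perm (Fin n) → ℕ) (d : ℕ) :
    (∑ π : Equiv.Perm (Fin n), if Q π then (Polynomial.X : Polynomial ℤ) ^ f π else 0).coeff d =
      (Nat.card {π : Equiv.Perm (Fin n) // Q π ∧ f π = d} : ℤ) := by
  classical
  rw [Nat.card_eq_fintype_card, Fintype.card_subtype, Polynomial.finsetSum_coeff,
    Finset.card_filter, Nat.cast_sum]
  refine Finset.sum_congr rfl fun π _ => ?_
  by_cases h : Q π
  · simp [h, Polynomial.coeff_X_pow, eq_comm]
  · simp [h]

theorem ph_Pf (s : List Bool) :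
    ph (Pf xx yy s) = if 0 ≤ mn s then (Polynomial.X : Polynomial ℤ) ^ s.count false else 0 := by
  rw [Pf, apply_ite ph, ph_wt, map_zero]

end
end BF

set_option linter.unusedSectionVars false
namespace BF
open Finset
noncomputable section
variable {n : ℕ}

theorem gf_ballot (a b c : Fin n) (hB : [a, b, c].Nodup)
    [DecidablePred fun π : Equiv.Perm (Fin n) =>
      IsBallot n π ∧ HasFactor n π (a + 1) (b + 1) (c + 1)]
    (R : Finset (Fin n)) (hR : R = univ \ [a, b, c].toFinset) :
    (∑ π : Equiv.Perm (Fin n), if IsBallot n π ∧ HasFactor n π (a + 1) (b + 1) (c + 1)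
      then (Polynomial.X : Polynomial ℤ) ^ desNum n π else 0) =
    ∑ T ∈ R.powerset, ∑ u ∈ words T, ∑ v ∈ words (R \ T),
      ph (Pf xx yy (st lt' (u ++ ([a, b, c] ++ v)))) := by
  classical
  have h1 := sum_block [a, b, c] hB (by simp) R
    (by rw [hR]; exact disjoint_sdiff) (fun w => ph (Pf xx yy (st lt' w)))
  rw [← h1]
  have h2 : [a, b, c].toFinset ∪ R = univ := by
    rw [hR]; exact union_sdiff_of_subset (subset_univ _)
  rw [h2, sum_filter, ← sum_perm_words
    (fun w => if [a, b, c] <:+: w then ph (Pf xx yy (st lt' w)) else 0)]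
  refine sum_congr rfl fun π _ => ?_
  simp only [ph_Pf, isBallot_iff, hasFactor_iff, desNum_eq]
  by_cases h3 : 0 ≤ mn (st lt' (List.ofFn π)) <;>
    by_cases h4 : [a, b, c] <:+: List.ofFn π <;> simp [h3, h4]

theorem ph_block (s t : List Bool) :
    ph (Pf xx yy (s ++ true :: false :: t)) = Polynomial.X * ph (Pf xx yy (s ++ t)) := by
  rw [ph_Pf, ph_Pf, mn_block]
  split_ifs
  · rw [← pow_succ']
    congr 1
    simp [List.count_cons]
    omega
  · simp

theorem st_three (a b c : Fin n) (h1 : a < b) (h2 : c < b) (u v : List (Fin n)) :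
    st lt' (u ++ ([a, b, c] ++ v)) =
      st lt' (u ++ [a]) ++ true :: false :: st lt' (c :: v) := by
  have : u ++ ([a, b, c] ++ v) = u ++ a :: (b :: c :: v) := by simp
  rw [this, st_append]
  simp [st, lt', h1, h2.le]

theorem mem_w {T : Finset (Fin n)} {u : List (Fin n)} (hu : u ∈ words T) {x : Fin n}
    (hx : x ∈ u) : x ∈ T := by
  rw [mem_words] at hu
  rw [← hu.2]; simpa using hx

theorem gf_b1 (z L J : Fin n) (hz : ∀ x, z ≤ x) (hL : ∀ x, x ≤ L) (hzJ : z ≠ J) (hJL : J ≠ L)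
    (R : Finset (Fin n)) (hR : R = univ \ [z, L, J].toFinset)
    [DecidablePred fun π : Equiv.Perm (Fin n) =>
      IsBallot n π ∧ HasFactor n π (z + 1) (L + 1) (J + 1)] :
    (∑ π : Equiv.Perm (Fin n), if IsBallot n π ∧ HasFactor n π (z + 1) (L + 1) (J + 1)
      then (Polynomial.X : Polynomial ℤ) ^ desNum n π else 0) =
    Polynomial.X * ph (V (r1 J) (Pf xx yy) (insert J R)) := by
  have hJL' : J < L := lt_of_le_of_ne (hL J) hJL
  have hzJ' : z < J := lt_of_le_of_ne (hz J) hzJ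
  have hzL : z < L := hzJ'.trans hJL'
  have hJR : J ∉ R := by simp [hR]
  rw [gf_ballot z L J (by simp [hzJ, hzL.ne, hJL.symm]) R hR, V_insert _ _ _ _ hJR]
  simp only [map_sum, mul_sum]
  refine sum_congr rfl fun T hT => sum_congr rfl fun u hu => sum_congr rfl fun v hv => ?_
  rw [mem_powerset] at hT
  have hu' : ∀ x ∈ u, x ≠ J := fun x hx h => hJR (h ▸ hT (mem_w hu hx))
  have hv' : ∀ x ∈ v, x ≠ J := fun x hx h => hJR (h ▸ (mem_sdiff.mp (mem_w hv hx)).1)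
  rw [st_three z L J hzL hJL', ph_block, st_append (r1 J)]
  rw [st_snoc_congr (r := r1 J) (r' := lt') J z u (fun a _ b hb => r1_eq (hu' b hb))
    (fun a _ => by simp [r1, lt', hz a]),
    st_cons_congr (r := r1 J) (r' := lt') J J v (fun a _ b hb => r1_eq (hv' b hb))
    (fun a ha => r1_eq (hv' a ha))]

theorem gf_b2 (z L J : Fin n) (hz : ∀ x, z ≤ x) (hL : ∀ x, x ≤ L) (hzJ : z ≠ J) (hJL : J ≠ L)
    (R : Finset (Fin n)) (hR : R = univ \ [z, L, J].toFinset)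
    [DecidablePred fun π : Equiv.Perm (Fin n) =>
      IsBallot n π ∧ HasFactor n π (J + 1) (L + 1) (z + 1)] :
    (∑ π : Equiv.Perm (Fin n), if IsBallot n π ∧ HasFactor n π (J + 1) (L + 1) (z + 1)
      then (Polynomial.X : Polynomial ℤ) ^ desNum n π else 0) =
    Polynomial.X * ph (V (r2 J) (Pf xx yy) (insert J R)) := by
  have hJL' : J < L := lt_of_le_of_ne (hL J) hJL
  have hzJ' : z < J := lt_of_le_of_ne (hz J) hzJ
  have hzL : z < L := hzJ'.trans hJL'
  have hJR : J ∉ R := by simp [hR]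
  have hzR : z ∉ R := by simp [hR]
  have hR' : R = univ \ [J, L, z].toFinset := by
    rw [hR]; ext x; simp; tauto
  rw [gf_ballot J L z (by simp [hzJ.symm, hzL.ne', hJL]) R hR', V_insert _ _ _ _ hJR]
  simp only [map_sum, mul_sum]
  refine sum_congr rfl fun T hT => sum_congr rfl fun u hu => sum_congr rfl fun v hv => ?_
  rw [mem_powerset] at hT
  have hu' : ∀ x ∈ u, x ≠ J := fun x hx h => hJR (h ▸ hT (mem_w hu hx))
  have hv' : ∀ x ∈ v, x ≠ J := fun x hx h => hJR (h ▸ (mem_sdiff.mp (mem_w hv hx)).1)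
  have hv'' : ∀ x ∈ v, x ≠ z := fun x hx h => hzR (h ▸ (mem_sdiff.mp (mem_w hv hx)).1)
  rw [st_three J L z hJL' hzL, ph_block, st_append (r2 J)]
  rw [st_snoc_congr (r := r2 J) (r' := lt') J J u (fun a ha b _ => r2_eq (hu' a ha))
    (fun a ha => r2_eq (hu' a ha)),
    st_cons_congr (r := r2 J) (r' := lt') J z v (fun a ha b _ => r2_eq (hv' a ha))
    (fun a ha => by
      have : z < a := lt_of_le_of_ne (hz a) (hv'' a ha).symm
      simp [r2, lt', this])]

theorem st_last (z : Fin n) (l : List (Fin n)) (hz : ∀ x ∈ l, z ≤ x) (h0 : l ≠ []) :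
    st lt' (l ++ [z]) = st lt' l ++ [false] := by
  obtain ⟨u, a, rfl⟩ : ∃ u a, l = u ++ [a] :=
    ⟨l.dropLast, l.getLast h0, (List.dropLast_append_getLast h0).symm⟩
  rw [List.append_assoc]
  change st lt' (u ++ [a, z]) = _
  rw [st_snoc2]
  have := hz a (by simp)
  simp [lt', this]

theorem gf_p (z L J : Fin n) (hz : ∀ x, z ≤ x) (hL : ∀ x, x ≤ L) (hzJ : z ≠ J) (hJL : J ≠ L)
    (R : Finset (Fin n)) (hR : R = univ \ [z, L, J].toFinset)
    [DecidablePred fun π : Equiv.Perm (Fin n) =>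
      OddP π ∧ HasCyclicFactor n π (z + 1) (L + 1) (J + 1)] :
    (∑ π : Equiv.Perm (Fin n), if OddP π ∧ HasCyclicFactor n π (z + 1) (L + 1) (J + 1)
      then (Polynomial.X : Polynomial ℤ) ^ Mstat π else 0) =
    Polynomial.X * ∑ T ∈ R.powerset, (if Even T.card then ∑ w ∈ words T,
      Polynomial.X ^ min ((st lt' (J::w)).count false + 1) ((st lt' (J::w)).count true) else 0)
        * BB (R \ T) := by
  classical
  have hJL' : J < L := lt_of_le_of_ne (hL J) hJL
  have hzJ' : z < J := lt_of_le_of_ne (hz J) hzJ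
  have hzL : z < L := hzJ'.trans hJL'
  have hnod : [z, L, J].Nodup := by simp [hzJ, hzL.ne, hJL.symm]
  have h1 := odd_sum z [L, J] univ hnod (subset_univ _)
  rw [← hR, sum_filter] at h1
  have hch : ∀ π : Equiv.Perm (Fin n),
      HasCyclicFactor n π (z + 1) (L + 1) (J + 1) ↔ Ch π [z, L, J] := by
    intro π
    unfold HasCyclicFactor Ch
    constructor
    · rintro ⟨x, y, w, hx, hy, hw, e1, e2⟩
      have hx : x = z := Fin.ext (by omega)
      have hy : y = L := Fin.ext (by omega)
      have hw : w = J := Fin.ext (by omega)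
      subst hx hy hw
      simp [e1, e2]
    · intro h
      simp at h
      exact ⟨z, L, J, rfl, rfl, rfl, h.1, h.2⟩
  have h2 := fun π : Equiv.Perm (Fin n) => show
      (if OddP π ∧ HasCyclicFactor n π (z + 1) (L + 1) (J + 1)
      then (Polynomial.X : Polynomial ℤ) ^ Mstat π else 0) =
      if π.support ⊆ univ ∧ Ch π [z, L, J] then
        (if OddP π then Polynomial.X ^ Mstat π else 0) else 0 by
    simp only [hch]
    by_cases h3 : OddP π <;> by_cases h4 : Ch π [z, L, J] <;> simp [h3, h4]
  rw [sum_congr rfl (fun π _ => h2 π), h1, mul_sum]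
  refine sum_congr rfl fun T hT => ?_
  rw [mem_powerset] at hT
  rw [OO_eq_BB, ← mul_assoc]
  congr 1
  have hpar : Odd ([L, J].length + 1 + T.card) ↔ Even T.card := by
    simp only [List.length_cons, List.length_nil]
    rw [Nat.odd_iff, Nat.even_iff]; omega
  simp only [hpar]
  split_ifs
  · rw [mul_sum]
    refine sum_congr rfl fun w hw => ?_
    have hwn : (z :: ([L, J] ++ w)).Nodup := by
      have hw1 := (mem_words.mp hw).1
      have hd : ∀ x ∈ w, x ≠ z ∧ x ≠ L ∧ x ≠ J := by
        intro x hx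
        have := hT (mem_w hw hx)
        rw [hR] at this
        simpa using this
      have e : z :: ([L, J] ++ w) = [z, L, J] ++ w := rfl
      rw [e, List.nodup_append]
      refine ⟨hnod, hw1, ?_⟩
      intro a ha b hb hab
      subst hab
      have := hd a hb
      simp at ha
      tauto
    rw [cw_eq _ _ hwn (by simp), ← pow_succ']
    have e : st lt' (z :: ([L, J] ++ w) ++ [z]) = true :: false :: (st lt' (J :: w) ++ [false]) := by
      rw [← st_last z (J :: w) (fun x _ => hz x) (by simp)]
      simp [st, lt', hzL, hJL'.le]
    rw [e]
    congr 1
    simp [List.count_cons]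
  · simp

theorem final (n d j : ℕ) (hn : 3 ≤ n) (hj1 : 2 ≤ j)
    (hj2 : j ≤ n - 1) :
    ballotFactorCount n d 1 j + ballotFactorCount n d j 1 =
      2 * oddOrderCyclicCount n d 1 j := by
  classical
  obtain ⟨z, hzv⟩ : ∃ z : Fin n, z.val = 0 := ⟨⟨0, by omega⟩, rfl⟩
  obtain ⟨L, hLv⟩ : ∃ z : Fin n, z.val + 1 = n := ⟨⟨n - 1, by omega⟩, by simp; omega⟩
  obtain ⟨J, hJv⟩ : ∃ z : Fin n, z.val + 1 = j := ⟨⟨j - 1, by omega⟩, by simp; omega⟩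
  have hz : ∀ x, z ≤ x := fun x => Fin.le_def.mpr (by omega)
  have hL : ∀ x, x ≤ L := fun x => Fin.le_def.mpr (by have := x.isLt; omega)
  have hzJ : z ≠ J := fun h => by have := congrArg Fin.val h; omega
  have hJL : J ≠ L := fun h => by have := congrArg Fin.val h; omega
  have b1 := gf_b1 z L J hz hL hzJ hJL _ rfl
  have b2 := gf_b2 z L J hz hL hzJ hJL _ rfl
  have p1 := gf_p z L J hz hL hzJ hJL _ rfl
  have hm := main1_poly J (univ \ [z, L, J].toFinset) (by simp)
  have key : (∑ π : Equiv.Perm (Fin n), if IsBallot n π ∧ HasFactor n π (z + 1) (L + 1) (J + 1)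
      then (Polynomial.X : Polynomial ℤ) ^ desNum n π else 0) +
      (∑ π : Equiv.Perm (Fin n), if IsBallot n π ∧ HasFactor n π (J + 1) (L + 1) (z + 1)
      then (Polynomial.X : Polynomial ℤ) ^ desNum n π else 0) =
      2 * (∑ π : Equiv.Perm (Fin n), if OddP π ∧ HasCyclicFactor n π (z + 1) (L + 1) (J + 1)
      then (Polynomial.X : Polynomial ℤ) ^ Mstat π else 0) := by
    rw [b1, b2, p1, ← mul_add, hm]; ring
  have hc := congrArg (fun p => Polynomial.coeff p d) key
  simp only [Polynomial.coeff_add, two_mul] at hc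
  rw [coeff_card, coeff_card, coeff_card, hzv, hLv, hJv, zero_add] at hc
  have c1 : ∀ a c, ballotFactorCount n d a c =
      Nat.card {π : Equiv.Perm (Fin n) // (IsBallot n π ∧ HasFactor n π a n c) ∧ desNum n π = d} :=
    fun a c => Nat.card_congr (Equiv.subtypeEquivRight fun π => by tauto)
  have c2 : oddOrderCyclicCount n d 1 j =
      Nat.card {π : Equiv.Perm (Fin n) // (OddP π ∧ HasCyclicFactor n π 1 n j) ∧ Mstat π = d} :=
    Nat.card_congr (Equiv.subtypeEquivRight fun π => by unfold OddP; tauto)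
  rw [c1, c1, c2, two_mul]
  exact_mod_cast hc

end
end BF

/-- For `n ≥ 3`, `d ≥ 0` and `2 ≤ j ≤ n-1`:
`b_{n,d}(1,j) + b_{n,d}(j,1) = 2·p_{n,d}(1,j)`. -/
theorem ballot_factor_eq_two_mul_odd (n d j : ℕ) (hn : 3 ≤ n) (hj1 : 2 ≤ j)
    (hj2 : j ≤ n - 1) :
    ballotFactorCount n d 1 j + ballotFactorCount n d j 1 =
      2 * oddOrderCyclicCount n d 1 j := by
  exact BF.final n d j hn hj1 hj2
end

section
/- For all integers n ≥ 3, 2 ≤ j ≤ n−1, and 0 ≤ d ≤ n−1, one has E(n,d,j) = Σ_{l=1}^{n−2} Σ_{k≥0} Σ_{u=0}^{j−2} binom(j−2,u)·binom(n−j−1, l−1−u)·A(n−l−2, d−k−1)·( A(l, l−1−k, u+1) + A(l, k−1, u+1) ) + A(n−2, d−1, j−1) − A(n−2, d−2, j−1), where the inner sum over k has only finitely many nonzero terms. -/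
/-- Eulerian number `A(n,d)` (with `A(0,0) = 1`, and `0` for negative arguments). -/
noncomputable def eulerian (n d : ℤ) : ℕ :=
  if 0 ≤ n ∧ 0 ≤ d then
    Nat.card {π : Equiv.Perm (Fin n.toNat) // desNum n.toNat π = d.toNat}
  else 0

/-- `A(n,d,j)`: the number of permutations of `[n]` with `d` descents and first
letter `j`; by convention `0` unless `n ≥ 1`, `0 ≤ d ≤ n-1` and `1 ≤ j ≤ n`. -/
noncomputable def eulerianFirst (n d j : ℤ) : ℕ :=
  if 1 ≤ n ∧ 0 ≤ d ∧ 1 ≤ j then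
    Nat.card {π : Equiv.Perm (Fin n.toNat) //
      desNum n.toNat π = d.toNat ∧ permWord n.toNat π 0 = j.toNat}
  else 0

/-- `E(n,d,j)`: the number of permutations of `[n]` with `d` descents having
`1 n j` or `j n 1` as a factor. -/
noncomputable def Ecount (n d j : ℕ) : ℕ :=
  Nat.card {π : Equiv.Perm (Fin n) //
    desNum n π = d ∧ (HasFactor n π 1 n j ∨ HasFactor n π j n 1)}

/-- Binomial coefficient with integer lower index: `0` if the lower index is negative. -/
def zchoose (a b : ℤ) : ℤ :=
  if 0 ≤ b then (a.toNat.choose b.toNat : ℤ) else 0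

section Aux

open Finset

def desL : List ℕ → ℕ
  | [] => 0
  | [_] => 0
  | a :: b :: t => (if b < a then 1 else 0) + desL (b :: t)

theorem desL_app_lo (a : ℕ) (v : List ℕ) : ∀ x : List ℕ, (∀ y ∈ x, a < y) →
    desL (x ++ a :: v) = desL x + (if x = [] then 0 else 1) + desL (a :: v)
  | [], _ => by simp [desL]
  | [b], h => by simp at h; simp [desL, h]
  | b :: c :: t, h => by
    have := desL_app_lo a v (c :: t) (fun y hy => h y (List.mem_cons_of_mem _ hy))
    simp only [List.cons_append, desL] at *
    rw [this]; simp; omega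

theorem desL_app_hi (a : ℕ) (v : List ℕ) : ∀ x : List ℕ, (∀ y ∈ x, y < a) →
    desL (x ++ a :: v) = desL x + desL (a :: v)
  | [], _ => by simp [desL]
  | [b], h => by simp at h; simp [desL]; omega
  | b :: c :: t, h => by
    have := desL_app_hi a v (c :: t) (fun y hy => h y (List.mem_cons_of_mem _ hy))
    simp only [List.cons_append, desL] at *
    rw [this]; omega

theorem desL_snoc (b a : ℕ) : ∀ x : List ℕ,
    desL (x ++ [b, a]) = desL (x ++ [b]) + (if a < b then 1 else 0)
  | [] => by simp [desL]
  | [c] => by simp [desL]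
  | c :: e :: t => by
    have := desL_snoc b a (e :: t)
    simp only [List.cons_append, desL] at *
    rw [this]; omega

theorem desL_reverse : ∀ v : List ℕ, v.Nodup → v ≠ [] →
    desL v.reverse + desL v + 1 = v.length
  | [], _, h => absurd rfl h
  | [a], _, _ => by simp [desL]
  | a :: b :: t, hn, _ => by
    have := desL_reverse (b :: t) (List.Nodup.of_cons hn) (by simp)
    have hab : a ≠ b := by rintro rfl; simp at hn
    have h2 := desL_snoc b a t.reverse
    simp only [List.reverse_cons, List.append_assoc, List.cons_append, List.nil_append, desL, List.length_cons] at *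
    rw [h2]
    split_ifs <;> omega

theorem desL_eq_sum : ∀ w : List ℕ, desL w =
    ∑ i ∈ range (w.length - 1), if w.getD (i+1) 0 < w.getD i 0 then 1 else 0
  | [] => by simp [desL]
  | [a] => by simp [desL]
  | a :: b :: t => by
    have := desL_eq_sum (b :: t)
    simp only [List.length_cons, Nat.add_sub_cancel] at *
    rw [Finset.sum_range_succ', desL, this]
    rw [add_comm]
    congr 1

def LS (S : Finset ℕ) : Finset (List ℕ) := S.val.lists.toFinset

theorem mem_LS {S : Finset ℕ} {w : List ℕ} : w ∈ LS S ↔ w.Nodup ∧ w.toFinset = S := by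
  unfold LS
  rw [Multiset.mem_toFinset, Multiset.mem_lists_iff]
  constructor
  · intro h
    have h' : S.val = (w : Multiset ℕ) := h
    have hn : w.Nodup := by
      have := S.nodup; rw [h'] at this; exact this
    refine ⟨hn, ?_⟩
    ext x
    rw [List.mem_toFinset, ← Finset.mem_val, h']; rfl
  · rintro ⟨h1, rfl⟩
    show (w.toFinset).val = (w : Multiset ℕ)
    rw [List.toFinset_val, h1.dedup]

theorem LS_length {S : Finset ℕ} {w : List ℕ} (h : w ∈ LS S) : w.length = S.card := by
  obtain ⟨h1, rfl⟩ := mem_LS.1 h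
  exact (List.toFinset_card_of_nodup h1).symm

def toL {m : ℕ} (f : Fin m → ℕ) (π : Equiv.Perm (Fin m)) : List ℕ := List.ofFn (fun i => f (π i))

theorem card_perm {m : ℕ} (f : Fin m → ℕ) (hf : StrictMono f) (S : Finset ℕ)
    (hS : univ.image f = S) (P : Equiv.Perm (Fin m) → Prop) (Q : List ℕ → Prop) [DecidablePred Q]
    (h : ∀ π, P π ↔ Q (toL f π)) :
    Nat.card {π // P π} = ((LS S).filter Q).card := by
  classical
  rw [Nat.card_eq_fintype_card, Fintype.card_subtype]
  apply Finset.card_bij (fun π _ => toL f π)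
  · intro π hπ
    rw [Finset.mem_filter] at hπ ⊢
    refine ⟨mem_LS.2 ⟨?_, ?_⟩, (h π).1 hπ.2⟩
    · unfold toL
      rw [List.nodup_ofFn]
      exact hf.injective.comp π.injective
    · subst hS
      ext x
      simp only [toL, List.mem_toFinset, List.mem_ofFn, Set.mem_range, mem_image, mem_univ, true_and]
      exact ⟨fun ⟨i, hi⟩ => ⟨π i, hi⟩, fun ⟨i, hi⟩ => ⟨π.symm i, by simpa using hi⟩⟩
  · intro π _ σ _ he
    have := List.ofFn_injective he
    ext i
    have := hf.injective (congrFun this i)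
    rw [this]
  · intro w hw
    rw [Finset.mem_filter] at hw
    obtain ⟨hw, hq⟩ := hw
    have hl : w.length = m := by
      rw [LS_length hw, ← hS, card_image_of_injective _ hf.injective]; simp
    obtain ⟨hn, ht⟩ := mem_LS.1 hw
    have hex : ∀ i : Fin m, ∃ k, f k = w[i.1]'(by omega) := by
      intro i
      have : w[i.1]'(by omega) ∈ w.toFinset := by simp
      rw [ht, ← hS] at this
      simpa using this
    choose g hg using hex
    have gi : Function.Injective g := by
      intro a b hab
      have : w[a.1]'(by omega) = w[b.1]'(by omega) := by rw [← hg, ← hg, hab]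
      exact Fin.ext ((hn.getElem_inj_iff).1 this)
    have key : toL f (Equiv.ofBijective g (Finite.injective_iff_bijective.1 gi)) = w := by
      apply List.ext_getElem
      · simp [toL, hl]
      · intro i h1 h2
        simp [toL, hg]
    refine ⟨_, ?_, key⟩
    rw [Finset.mem_filter]
    refine ⟨mem_univ _, (h _).2 ?_⟩
    rw [key]; exact hq

theorem desL_toL {m : ℕ} (f : Fin m → ℕ) (hf : StrictMono f) (π : Equiv.Perm (Fin m)) :
    desL (toL f π) = desNum m π := by
  rw [desL_eq_sum, desNum, Finset.card_filter]
  have hl : (toL f π).length = m := by simp [toL]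
  rw [hl]
  apply Finset.sum_congr rfl
  intro i hi
  rw [Finset.mem_range] at hi
  have h1 : i < m := by omega
  have h2 : i + 1 < m := by omega
  congr 1
  simp [toL, permWord, h1, h2, hf.lt_iff_lt]

def FZ (S : Finset ℕ) (a : ℤ) : ℕ := ((LS S).filter (fun w => (desL w : ℤ) = a)).card
def GZ (S : Finset ℕ) (a : ℤ) (j : ℕ) : ℕ :=
  ((LS S).filter (fun w => (desL w : ℤ) = a ∧ w.head? = some j)).card

theorem eulerian_eq (S : Finset ℕ) (N a : ℤ) (hN : N = S.card) : eulerian N a = FZ S a := by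
  subst hN
  unfold eulerian FZ
  by_cases ha : 0 ≤ a
  · rw [if_pos ⟨by omega, ha⟩]
    refine card_perm (S.orderEmbOfFin rfl) (S.orderEmbOfFin rfl).strictMono S ?_ _ _ ?_
    · apply Finset.coe_injective; simp
    · intro π
      have := desL_toL (S.orderEmbOfFin rfl) (S.orderEmbOfFin rfl).strictMono π
      rw [this]
      simp only [Int.toNat_natCast]; omega
  · rw [if_neg (by tauto)]
    symm
    rw [Finset.card_eq_zero, Finset.filter_eq_empty_iff]
    intro w _; omega

theorem rank_emb (S : Finset ℕ) (i : Fin S.card) :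
    (S.filter (· < S.orderEmbOfFin rfl i)).card = i := by
  have : S.filter (· < S.orderEmbOfFin rfl i) = (Finset.Iio i).map (S.orderEmbOfFin rfl).toEmbedding := by
    ext x
    simp only [mem_filter, mem_map, mem_Iio]
    constructor
    · rintro ⟨hx, hlt⟩
      have : x ∈ Set.range (S.orderEmbOfFin rfl) := by simpa using hx
      obtain ⟨k, rfl⟩ := this
      exact ⟨k, by simpa using hlt, rfl⟩
    · rintro ⟨k, hk, rfl⟩
      exact ⟨by simp, by simpa using hk⟩
  rw [this, card_map]; simp

theorem eulerianFirst_eq (S : Finset ℕ) (j : ℕ) (hj : j ∈ S) (N a r : ℤ) (hN : N = S.card)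
    (hr : r = (S.filter (· < j)).card + 1) : eulerianFirst N a r = GZ S a j := by
  subst hN
  have hpos : 0 < S.card := Finset.card_pos.2 ⟨j, hj⟩
  unfold eulerianFirst GZ
  by_cases ha : 0 ≤ a
  · rw [if_pos ⟨by omega, ha, by omega⟩]
    refine card_perm (S.orderEmbOfFin rfl) (S.orderEmbOfFin rfl).strictMono S ?_ _ _ ?_
    · apply Finset.coe_injective; simp
    · intro π
      have := desL_toL (S.orderEmbOfFin rfl) (S.orderEmbOfFin rfl).strictMono π
      rw [this]
      simp only [Int.toNat_natCast]
      refine and_congr (by omega) ?_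
      have hh : (toL (S.orderEmbOfFin rfl) π).head? = some (S.orderEmbOfFin rfl (π ⟨0, hpos⟩)) := by
        rw [List.head?_eq_getElem?]
        simp [toL, hpos]
      rw [hh]
      simp only [permWord, Int.toNat_natCast, hpos, dif_pos, Option.some.injEq]
      have hjr : j ∈ Set.range (S.orderEmbOfFin rfl) := by simpa using hj
      obtain ⟨k, rfl⟩ := hjr
      rw [rank_emb] at hr
      rw [(S.orderEmbOfFin rfl).injective.eq_iff, Fin.ext_iff, hr]
      omega
  · rw [if_neg (by tauto)]
    symm
    rw [Finset.card_eq_zero, Finset.filter_eq_empty_iff]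
    intro w _; omega

theorem infix_iff (a b c : ℕ) (w : List ℕ) : [a,b,c] <:+: w ↔
    ∃ k, k + 2 < w.length ∧ w.getD k 0 = a ∧ w.getD (k+1) 0 = b ∧ w.getD (k+2) 0 = c := by
  constructor
  · rintro ⟨s, t, rfl⟩
    refine ⟨s.length, by simp, ?_, ?_, ?_⟩ <;> simp [List.getD_eq_getElem?_getD, List.getElem?_append]
  · rintro ⟨k, hk, h1, h2, h3⟩
    rw [List.getD_eq_getElem _ _ (by omega)] at h1 h2 h3
    refine ⟨w.take k, w.drop (k+3), ?_⟩
    conv_rhs => rw [← List.take_append_drop k w]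
    rw [List.drop_eq_getElem_cons (by omega : k < w.length), List.drop_eq_getElem_cons (by omega : k+1 < w.length), List.drop_eq_getElem_cons (by omega : k+1+1 < w.length)]
    simp [h1, h2, h3]

theorem Ecount_eq (n d j : ℕ) : Ecount n d j =
    ((LS (Icc 1 n)).filter (fun w => desL w = d ∧ ([1,n,j] <:+: w ∨ [j,n,1] <:+: w))).card := by
  unfold Ecount
  have hf : StrictMono (fun i : Fin n => (i:ℕ) + 1) := fun a b h => by simpa using h
  refine card_perm (fun i : Fin n => (i:ℕ) + 1) hf _ ?_ _ _ ?_
  · ext x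
    simp only [mem_image, mem_univ, true_and, mem_Icc]
    exact ⟨by rintro ⟨i, rfl⟩; omega, fun h => ⟨⟨x-1, by omega⟩, by simp; omega⟩⟩
  · intro π
    rw [desL_toL _ hf, infix_iff, infix_iff]
    have hl : (toL (fun i : Fin n => (i:ℕ) + 1) π).length = n := by simp [toL]
    have hg : ∀ i, (toL (fun i : Fin n => (i:ℕ) + 1) π).getD i 0 = permWord n π i := by
      intro i
      by_cases h : i < n <;> simp [toL, permWord, h]
    simp only [hl, hg, HasFactor]

theorem LS_perm {S : Finset ℕ} {w w' : List ℕ} (h : w.Perm w') : w ∈ LS S ↔ w' ∈ LS S := by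
  rw [mem_LS, mem_LS, h.nodup_iff, List.toFinset_eq_of_perm _ _ h]

theorem LS_cons {S : Finset ℕ} {a : ℕ} {w : List ℕ} :
    a :: w ∈ LS S ↔ a ∈ S ∧ w ∈ LS (S.erase a) := by
  rw [mem_LS, mem_LS, List.nodup_cons, List.toFinset_cons]
  constructor
  · rintro ⟨⟨h1, h2⟩, rfl⟩
    refine ⟨by simp, h2, ?_⟩
    rw [Finset.erase_insert (by simpa using h1)]
  · rintro ⟨h1, h2, h3⟩
    refine ⟨⟨?_, h2⟩, by rw [h3, Finset.insert_erase h1]⟩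
    rw [← List.mem_toFinset, h3]; simp

theorem LS_cons2 {n : ℕ} (hn : 2 ≤ n) {w : List ℕ} :
    1 :: n :: w ∈ LS (Icc 1 n) ↔ w ∈ LS (Ioo 1 n) := by
  rw [LS_cons, LS_cons]
  have : ((Icc 1 n).erase 1).erase n = Ioo 1 n := by
    ext x; simp only [mem_erase, mem_Icc, mem_Ioo]; omega
  rw [this]
  simp only [mem_Icc, mem_erase]
  constructor
  · rintro ⟨_, _, h⟩; exact h
  · intro h; exact ⟨by omega, by omega, h⟩

theorem LS_form1 {n : ℕ} (hn : 2 ≤ n) {x v : List ℕ} :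
    x ++ 1 :: n :: v ∈ LS (Icc 1 n) ↔ x ++ v ∈ LS (Ioo 1 n) := by
  rw [← LS_cons2 hn]
  apply LS_perm
  exact List.perm_middle.trans (List.Perm.cons _ List.perm_middle)

theorem LS_form2 {n : ℕ} (hn : 2 ≤ n) {x v : List ℕ} :
    v.reverse ++ n :: 1 :: x ∈ LS (Icc 1 n) ↔ x ++ v ∈ LS (Ioo 1 n) := by
  rw [← LS_cons2 hn]
  apply LS_perm
  refine List.perm_middle.trans ?_
  refine (List.Perm.cons _ List.perm_middle).trans ?_
  refine (List.Perm.swap _ _ _).trans ?_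
  refine List.Perm.cons _ (List.Perm.cons _ ?_)
  exact List.perm_append_comm.trans (List.Perm.append_left _ (List.reverse_perm v))

theorem split_unique {a : ℕ} {s t s' t' : List ℕ} (h : s ++ a :: t = s' ++ a :: t')
    (hn : (s ++ a :: t).Nodup) : s = s' ∧ t = t' := by
  induction s generalizing s' with
  | nil =>
    cases s' with
    | nil => simpa using h
    | cons b s' =>
      simp at h
      obtain ⟨rfl, rfl⟩ := h
      simp at hn
  | cons b s ih =>
    cases s' with
    | nil =>
      simp at h
      obtain ⟨rfl, rfl⟩ := h
      simp at hn
    | cons c s' =>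
      simp only [List.cons_append, List.cons.injEq] at h
      obtain ⟨rfl, h⟩ := h
      have := ih h (by simpa using (List.Nodup.of_cons hn))
      simp [this]

def Xs (n j : ℕ) (p : Finset ℕ × Finset ℕ) : Finset ℕ := (Ioo 1 j \ p.1) ∪ (Ioo j n \ p.2)
def Vs (j : ℕ) (p : Finset ℕ × Finset ℕ) : Finset ℕ := insert j (p.1 ∪ p.2)
def XV (n j : ℕ) (p : Finset ℕ × Finset ℕ) : Finset (List ℕ × List ℕ) :=
  LS (Xs n j p) ×ˢ (LS (Vs j p)).filter (fun v => v.head? = some j)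
def idx (n j : ℕ) : Finset (Finset ℕ × Finset ℕ) := (Ioo 1 j).powerset ×ˢ (Ioo j n).powerset
def PP (n j : ℕ) : Finset (List ℕ × List ℕ) := (idx n j).biUnion (XV n j)

theorem XV_p {n j : ℕ} {p : Finset ℕ × Finset ℕ} (hp : p ∈ idx n j) {q : List ℕ × List ℕ}
    (hq : q ∈ XV n j p) :
    p = (q.2.toFinset.filter (· < j), q.2.toFinset.filter (j < ·)) := by
  simp only [XV, mem_product, mem_filter, mem_LS] at hq
  simp only [idx, mem_product, mem_powerset] at hp
  obtain ⟨_, ⟨_, h⟩, _⟩ := hq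
  rw [h, Vs]
  ext x
  · have h1 := @hp.1 x; have h2 := @hp.2 x
    simp only [mem_Ioo, mem_filter, mem_insert, mem_union] at *
    grind
  · have h1 := @hp.1 x; have h2 := @hp.2 x
    simp only [mem_Ioo, mem_filter, mem_insert, mem_union] at *
    grind

theorem PP_card (n j : ℕ) (Q : List ℕ × List ℕ → Prop) [DecidablePred Q] :
    ((PP n j).filter Q).card = ∑ p ∈ idx n j, ((XV n j p).filter Q).card := by
  rw [PP, Finset.filter_biUnion, Finset.card_biUnion]
  intro p hp p' hp' hne
  show Disjoint _ _
  rw [Finset.disjoint_left]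
  intro q h1 h2
  exact hne ((XV_p hp (mem_filter.1 h1).1).trans (XV_p hp' (mem_filter.1 h2).1).symm)

theorem mem_PP {n j : ℕ} (hj1 : 2 ≤ j) (hj2 : j < n) {x v : List ℕ} :
    (x, v) ∈ PP n j ↔ x ++ v ∈ LS (Ioo 1 n) ∧ v.head? = some j := by
  constructor
  · intro h
    rw [PP, mem_biUnion] at h
    obtain ⟨⟨A, B⟩, hp, hq⟩ := h
    simp only [XV, mem_product, mem_filter, mem_LS, Xs, Vs] at hq
    simp only [idx, mem_product, mem_powerset] at hp
    obtain ⟨⟨h1, h2⟩, ⟨h3, h4⟩, h5⟩ := hq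
    refine ⟨mem_LS.2 ⟨?_, ?_⟩, h5⟩
    · rw [List.nodup_append']
      refine ⟨h1, h3, ?_⟩
      intro y hy hy'
      rw [← List.mem_toFinset] at hy hy'
      rw [h2] at hy
      rw [h4] at hy'
      have h6 := @hp.1 y; have h7 := @hp.2 y
      simp only [mem_Ioo, mem_sdiff, mem_insert, mem_union] at *
      grind
    · rw [List.toFinset_append, h2, h4]
      ext y
      have h6 := @hp.1 y; have h7 := @hp.2 y
      simp only [mem_Ioo, mem_sdiff, mem_insert, mem_union] at *
      grind
  · rintro ⟨h, h5⟩
    rw [mem_LS, List.nodup_append', List.toFinset_append] at h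
    obtain ⟨⟨h1, h3, hd⟩, h4⟩ := h
    have hjv : j ∈ v := List.mem_of_mem_head? h5
    rw [PP, mem_biUnion]
    refine ⟨(v.toFinset.filter (· < j), v.toFinset.filter (j < ·)), ?_, ?_⟩
    · simp only [idx, mem_product, mem_powerset]
      constructor
      · intro y hy
        have := Finset.ext_iff.1 h4 y
        simp only [mem_filter, mem_union, mem_Ioo] at *
        grind
      · intro y hy
        have := Finset.ext_iff.1 h4 y
        simp only [mem_filter, mem_union, mem_Ioo] at *
        grind
    · simp only [XV, mem_product, mem_filter, mem_LS, Xs, Vs]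
      refine ⟨⟨h1, ?_⟩, ⟨h3, ?_⟩, h5⟩
      · ext y
        have := Finset.ext_iff.1 h4 y
        have hd' := @hd y
        simp only [mem_filter, mem_union, mem_Ioo, mem_sdiff, List.mem_toFinset] at *
        grind
      · ext y
        have := Finset.ext_iff.1 h4 y
        simp only [mem_filter, mem_union, mem_Ioo, mem_insert, List.mem_toFinset] at *
        grind

theorem W1_card {n d j : ℕ} (hj1 : 2 ≤ j) (hj2 : j < n) :
    ((LS (Icc 1 n)).filter (fun w => desL w = d ∧ [1,n,j] <:+: w)).card =
    ((PP n j).filter (fun q =>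
      desL q.1 + (if q.1 = [] then 0 else 1) + 1 + desL q.2 = d)).card := by
  symm
  have hdes : ∀ x v : List ℕ, (x, v) ∈ PP n j → desL (x ++ 1 :: n :: v) =
      desL x + (if x = [] then 0 else 1) + 1 + desL v := by
    intro x v h
    rw [mem_PP hj1 hj2] at h
    obtain ⟨h, h5⟩ := h
    have hm := (mem_LS.1 h).2
    rw [desL_app_lo]
    · cases v with
      | nil => simp at h5
      | cons b t =>
        simp at h5; subst h5
        simp only [desL]
        rw [if_neg (by omega : ¬ n < 1), if_pos hj2]; omega
    · intro y hy
      have : y ∈ (x ++ v).toFinset := by simp [hy]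
      rw [hm, mem_Ioo] at this; exact this.1
  apply Finset.card_bij (fun q _ => q.1 ++ 1 :: n :: q.2)
  · rintro ⟨x, v⟩ hq
    rw [mem_filter] at hq
    have hq1 := (mem_PP hj1 hj2).1 hq.1
    rw [mem_filter]
    refine ⟨(LS_form1 (by omega)).2 hq1.1, (hdes _ _ hq.1).trans hq.2, ?_⟩
    cases v with
    | nil => simp at hq1
    | cons b t =>
      have h5 := hq1.2
      simp at h5; subst h5
      exact ⟨x, t, by simp⟩
  · rintro ⟨x, v⟩ hq ⟨x', v'⟩ hq' he
    rw [mem_filter] at hq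
    have hq1 := (mem_PP hj1 hj2).1 hq.1
    have := split_unique he (mem_LS.1 ((LS_form1 (by omega)).2 hq1.1)).1
    simpa using this
  · intro w hw
    rw [mem_filter] at hw
    obtain ⟨hw, hd, s, t, rfl⟩ := hw
    have e : s ++ [1, n, j] ++ t = s ++ 1 :: n :: (j :: t) := by simp
    rw [e] at hw hd
    have hP : (s, j :: t) ∈ PP n j :=
      (mem_PP hj1 hj2).2 ⟨(LS_form1 (by omega)).1 hw, rfl⟩
    refine ⟨(s, j :: t), ?_, e.symm⟩
    rw [mem_filter]
    exact ⟨hP, (hdes _ _ hP).symm.trans hd⟩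

theorem W2_card {n d j : ℕ} (hj1 : 2 ≤ j) (hj2 : j < n) :
    ((LS (Icc 1 n)).filter (fun w => desL w = d ∧ [j,n,1] <:+: w)).card =
    ((PP n j).filter (fun q =>
      desL q.2.reverse + 1 + desL q.1 = d)).card := by
  symm
  have hdes : ∀ x v : List ℕ, (x, v) ∈ PP n j → desL (v.reverse ++ n :: 1 :: x) =
      desL v.reverse + 1 + desL x := by
    intro x v h
    rw [mem_PP hj1 hj2] at h
    obtain ⟨h, h5⟩ := h
    have hm := (mem_LS.1 h).2
    rw [desL_app_hi]
    · cases x with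
      | nil =>
        simp only [desL]
        rw [if_pos (by omega : 1 < n)]
      | cons b t =>
        have : b ∈ (b :: t ++ v).toFinset := by simp
        rw [hm, mem_Ioo] at this
        simp only [desL]
        rw [if_neg (by omega : ¬ b < 1), if_pos (by omega : 1 < n)]; omega
    · intro y hy
      have : y ∈ (x ++ v).toFinset := by
        rw [List.mem_reverse] at hy
        simp [hy]
      rw [hm, mem_Ioo] at this; exact this.2
  apply Finset.card_bij (fun q _ => q.2.reverse ++ n :: 1 :: q.1)
  · rintro ⟨x, v⟩ hq
    rw [mem_filter] at hq
    have hq1 := (mem_PP hj1 hj2).1 hq.1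
    rw [mem_filter]
    refine ⟨(LS_form2 (by omega)).2 hq1.1, (hdes _ _ hq.1).trans hq.2, ?_⟩
    cases v with
    | nil => simp at hq1
    | cons b t =>
      have h5 := hq1.2
      simp at h5; subst h5
      exact ⟨t.reverse, x, by simp⟩
  · rintro ⟨x, v⟩ hq ⟨x', v'⟩ hq' he
    rw [mem_filter] at hq
    have hq1 := (mem_PP hj1 hj2).1 hq.1
    have := split_unique he (mem_LS.1 ((LS_form2 (by omega)).2 hq1.1)).1
    simp at this
    simp [this]
  · intro w hw
    rw [mem_filter] at hw
    obtain ⟨hw, hd, s, t, rfl⟩ := hw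
    have e : s ++ [j, n, 1] ++ t = (j :: s.reverse).reverse ++ n :: 1 :: t := by simp
    rw [e] at hw hd
    have hP : (t, j :: s.reverse) ∈ PP n j :=
      (mem_PP hj1 hj2).2 ⟨(LS_form2 (by omega)).1 hw, rfl⟩
    refine ⟨(t, j :: s.reverse), ?_, e.symm⟩
    rw [mem_filter]
    exact ⟨hP, (hdes _ _ hP).symm.trans hd⟩

theorem E_split {n d j : ℕ} (hj1 : 2 ≤ j) (hj2 : j < n) : Ecount n d j =
    ((LS (Icc 1 n)).filter (fun w => desL w = d ∧ [1,n,j] <:+: w)).card +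
    ((LS (Icc 1 n)).filter (fun w => desL w = d ∧ [j,n,1] <:+: w)).card := by
  rw [Ecount_eq, ← Finset.card_union_of_disjoint]
  · congr 1
    ext w
    simp only [mem_filter, mem_union]
    tauto
  · rw [Finset.disjoint_left]
    intro w h1 h2
    rw [mem_filter] at h1 h2
    obtain ⟨hw, _, s, t, rfl⟩ := h1
    obtain ⟨_, _, s', t', he⟩ := h2
    have hn := (mem_LS.1 hw).1
    have e1 : s ++ [1, n, j] ++ t = (s ++ [1]) ++ n :: (j :: t) := by simp
    have e2 : s' ++ [j, n, 1] ++ t' = (s' ++ [j]) ++ n :: (1 :: t') := by simp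
    rw [e1] at hn he
    rw [e2] at he
    have := (split_unique he.symm hn).2
    simp at this
    omega

theorem prod_count {α β : Type} (X : Finset α) (V : Finset β) (f : α → ℤ) (g : β → ℤ)
    (c : ℤ) (N : ℕ) (hg : ∀ v ∈ V, 0 ≤ g v ∧ g v < N) :
    ((X ×ˢ V).filter (fun q => f q.1 + g q.2 = c)).card =
    ∑ k ∈ range N, (X.filter (fun x => f x = c - k)).card * (V.filter (fun v => g v = k)).card := by
  classical
  rw [Finset.card_eq_sum_card_fiberwise (f := fun q => (g q.2).toNat) (t := range N)]
  · apply Finset.sum_congr rfl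
    intro k _
    rw [← Finset.card_product]
    congr 1
    ext ⟨x, v⟩
    simp only [mem_filter, mem_product]
    constructor
    · rintro ⟨⟨⟨hx, hv⟩, h⟩, hk⟩
      have := hg v hv
      exact ⟨⟨hx, by omega⟩, hv, by omega⟩
    · rintro ⟨⟨hx, h⟩, hv, hk⟩
      exact ⟨⟨⟨hx, hv⟩, by omega⟩, by omega⟩
  · rintro ⟨x, v⟩ h
    rw [Finset.mem_coe, mem_filter, mem_product] at h
    have := hg v h.1.2
    simp only [coe_range, Set.mem_Iio]; omega

theorem Vs_card {n j : ℕ} {p : Finset ℕ × Finset ℕ} (hp : p ∈ idx n j) :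
    (Vs j p).card = p.1.card + p.2.card + 1 := by
  simp only [idx, mem_product, mem_powerset] at hp
  rw [Vs, Finset.card_insert_of_notMem, Finset.card_union_of_disjoint]
  · rw [Finset.disjoint_left]
    intro y h1 h2
    have h6 := hp.1 h1; have h7 := hp.2 h2
    simp only [mem_Ioo] at *
    omega
  · intro h
    have h6 := @hp.1 j; have h7 := @hp.2 j
    simp only [mem_Ioo, mem_union] at *
    grind

theorem Vs_rank {n j : ℕ} {p : Finset ℕ × Finset ℕ} (hp : p ∈ idx n j) :
    ((Vs j p).filter (· < j)).card = p.1.card := by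
  simp only [idx, mem_product, mem_powerset] at hp
  congr 1
  ext y
  have h6 := @hp.1 y; have h7 := @hp.2 y
  simp only [mem_Ioo, mem_union, Vs, mem_filter, mem_insert] at *
  grind

theorem Xs_card {n j : ℕ} (hj1 : 2 ≤ j) (hj2 : j < n) {p : Finset ℕ × Finset ℕ}
    (hp : p ∈ idx n j) :
    ((Xs n j p).card : ℤ) = (n : ℤ) - (p.1.card + p.2.card + 1) - 2 := by
  simp only [idx, mem_product, mem_powerset] at hp
  rw [Xs, Finset.card_union_of_disjoint, Finset.card_sdiff_of_subset hp.1,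
    Finset.card_sdiff_of_subset hp.2]
  · have h1 := Finset.card_le_card hp.1
    have h2 := Finset.card_le_card hp.2
    simp only [Nat.card_Ioo] at *
    omega
  · rw [Finset.disjoint_left]
    intro y h1 h2
    simp only [mem_Ioo, mem_sdiff] at *
    omega

noncomputable def hterm (n d : ℕ) (u v : ℕ) : ℕ → ℤ := fun k =>
  (eulerian ((n : ℤ) - (u + v + 1) - 2) ((d : ℤ) - k - 1) : ℤ) *
    ((eulerianFirst ((u : ℤ) + v + 1) ((u : ℤ) + v + 1 - 1 - k) ((u : ℤ) + 1) : ℤ) +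
      (eulerianFirst ((u : ℤ) + v + 1) ((k : ℤ) - 1) ((u : ℤ) + 1) : ℤ))

theorem desL_lt : ∀ v : List ℕ, v ≠ [] → desL v < v.length
  | [], h => absurd rfl h
  | [_], _ => by simp [desL]
  | a :: b :: t, _ => by
    have := desL_lt (b :: t) (by simp)
    simp only [desL, List.length_cons] at *
    split_ifs <;> omega

theorem XV_count {n d j : ℕ} (hj1 : 2 ≤ j) (hj2 : j < n) {p : Finset ℕ × Finset ℕ}
    (hp : p ∈ idx n j) :
    ((((XV n j p).filter (fun q =>
      desL q.1 + (if q.1 = [] then 0 else 1) + 1 + desL q.2 = d)).card : ℤ) +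
      ((XV n j p).filter (fun q => desL q.2.reverse + 1 + desL q.1 = d)).card) =
    (∑ k ∈ range (n + 1), hterm n d p.1.card p.2.card k) +
      (if p = (Ioo 1 j, Ioo j n) then
        (eulerianFirst ((n : ℤ) - 2) ((d : ℤ) - 1) ((j : ℤ) - 1) : ℤ) -
        (eulerianFirst ((n : ℤ) - 2) ((d : ℤ) - 2) ((j : ℤ) - 1) : ℤ) else 0) := by
  have hjV : j ∈ Vs j p := by simp [Vs]
  have hVc := Vs_card hp
  have hXc := Xs_card hj1 hj2 hp
  have hVn : p.1.card + p.2.card + 1 < n := by omega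
  have hlen : ∀ v ∈ (LS (Vs j p)).filter (fun v => v.head? = some j),
      v.length = p.1.card + p.2.card + 1 ∧ desL v < v.length ∧
        desL v.reverse + desL v + 1 = v.length := by
    intro v hv
    rw [mem_filter] at hv
    have hne : v ≠ [] := by rintro rfl; simp at hv
    exact ⟨(LS_length hv.1).trans hVc, desL_lt v hne, desL_reverse v (mem_LS.1 hv.1).1 hne⟩
  have eF : ∀ a, (eulerian ((n : ℤ) - (p.1.card + p.2.card + 1) - 2) a) = FZ (Xs n j p) a :=
    fun a => eulerian_eq _ _ _ hXc.symm
  have eG : ∀ a, eulerianFirst ((p.1.card : ℤ) + p.2.card + 1) a (p.1.card + 1) =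
      GZ (Vs j p) a j := fun a =>
    eulerianFirst_eq _ _ hjV _ _ _ (by rw [hVc]; push_cast; ring) (by rw [Vs_rank hp])
  -- second kind
  have k2 : ((XV n j p).filter (fun q => desL q.2.reverse + 1 + desL q.1 = d)).card =
      ∑ k ∈ range (n + 1), FZ (Xs n j p) ((d : ℤ) - k - 1) *
        GZ (Vs j p) ((p.1.card : ℤ) + p.2.card + 1 - 1 - k) j := by
    have := prod_count (LS (Xs n j p)) ((LS (Vs j p)).filter (fun v => v.head? = some j))
      (fun x => (desL x : ℤ)) (fun v => (p.1.card : ℤ) + p.2.card - desL v) ((d : ℤ) - 1) (n + 1)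
      (by intro v hv; have := hlen v hv; omega)
    calc _ = _ := ?_
      _ = _ := this
      _ = _ := ?_
    · rw [XV]
      congr 1
      apply Finset.filter_congr
      rintro ⟨x, v⟩ hq
      rw [mem_product] at hq
      have := hlen v hq.2
      simp only
      omega
    · apply Finset.sum_congr rfl
      intro k _
      rw [FZ, GZ, Finset.filter_filter]
      congr 2
      · apply Finset.filter_congr; intro x _; omega
      · apply Finset.filter_congr; intro x _; rw [and_comm]; apply and_congr_left; intro _; omega
  have k1 : ((XV n j p).filter (fun q => desL q.1 + 1 + 1 + desL q.2 = d)).card =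
      ∑ k ∈ range (n + 1), FZ (Xs n j p) ((d : ℤ) - k - 1) *
        GZ (Vs j p) ((k : ℤ) - 1) j := by
    have := prod_count (LS (Xs n j p)) ((LS (Vs j p)).filter (fun v => v.head? = some j))
      (fun x => (desL x : ℤ)) (fun v => (desL v : ℤ) + 1) ((d : ℤ) - 1) (n + 1)
      (by intro v hv; have := hlen v hv; omega)
    calc _ = _ := ?_
      _ = _ := this
      _ = _ := ?_
    · rw [XV]
      congr 1
      apply Finset.filter_congr
      rintro ⟨x, v⟩ hq
      simp only
      omega
    · apply Finset.sum_congr rfl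
      intro k _
      rw [FZ, GZ, Finset.filter_filter]
      congr 2
      · apply Finset.filter_congr; intro x _; omega
      · apply Finset.filter_congr; intro x _; rw [and_comm]; apply and_congr_left; intro _; omega
  have hsum : (∑ k ∈ range (n + 1), hterm n d p.1.card p.2.card k) =
      (((XV n j p).filter (fun q => desL q.1 + 1 + 1 + desL q.2 = d)).card : ℤ) +
      ((XV n j p).filter (fun q => desL q.2.reverse + 1 + desL q.1 = d)).card := by
    rw [k1, k2]
    push_cast
    rw [← Finset.sum_add_distrib]
    apply Finset.sum_congr rfl
    intro k _
    rw [hterm, eF, eG, eG]; ring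
  rw [hsum]
  by_cases hpe : p = (Ioo 1 j, Ioo j n)
  · rw [if_pos hpe]
    have hX : Xs n j p = ∅ := by rw [hpe]; simp [Xs]
    have hL : LS ∅ = {[]} := by
      ext w
      rw [mem_LS, mem_singleton, List.toFinset_eq_empty_iff]
      constructor
      · exact fun h => h.2
      · rintro rfl; simp
    have c1 : p.1.card = j - 2 := by rw [hpe]; simp; omega
    have c2 : p.2.card = n - j - 1 := by rw [hpe]; simp
    have e1 : ((p.1.card : ℤ) + p.2.card + 1) = (n : ℤ) - 2 := by omega
    have e2 : (p.1.card : ℤ) + 1 = (j : ℤ) - 1 := by omega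
    rw [e1, e2] at eG
    rw [eG, eG]
    have g : ∀ c : ℕ, ((XV n j p).filter (fun q => desL q.1 + (if q.1 = [] then 0 else c) + c + desL q.2 = d)).card = ((XV n j p).filter (fun q => c + desL q.2 = d)).card := by
      intro c
      congr 1
      apply Finset.filter_congr
      rintro ⟨x, v⟩ hq
      rw [XV, mem_product, hX, hL, mem_singleton] at hq
      obtain ⟨rfl, _⟩ := hq
      simp [desL]
    have g' : ((XV n j p).filter (fun q => desL q.1 + 1 + 1 + desL q.2 = d)).card = ((XV n j p).filter (fun q => 2 + desL q.2 = d)).card := by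
      congr 1
      apply Finset.filter_congr
      rintro ⟨x, v⟩ hq
      rw [XV, mem_product, hX, hL, mem_singleton] at hq
      obtain ⟨rfl, _⟩ := hq
      simp [desL]
    have g2 : ∀ c : ℕ, ((XV n j p).filter (fun q => c + desL q.2 = d)).card =
        GZ (Vs j p) ((d : ℤ) - c) j := by
      intro c
      rw [GZ, XV, hX, hL]
      symm
      apply Finset.card_bij (fun v _ => (([] : List ℕ), v))
      · intro v hv
        simp only [mem_filter, mem_product, mem_singleton] at hv ⊢
        exact ⟨⟨trivial, hv.1, hv.2.2⟩, by omega⟩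
      · intro v _ v' _ h
        simpa using h
      · rintro ⟨x, v⟩ h
        simp only [mem_filter, mem_product, mem_singleton] at h
        obtain ⟨⟨rfl, h1, h2⟩, h3⟩ := h
        refine ⟨v, ?_, rfl⟩
        rw [mem_filter]
        exact ⟨h1, by omega, h2⟩
    rw [g 1, g', g2, g2]
    push_cast
    ring
  · rw [if_neg hpe, add_zero]
    congr 3
    apply Finset.filter_congr
    rintro ⟨x, v⟩ hq
    have hx : x ≠ [] := by
      rintro rfl
      rw [XV, mem_product, mem_LS] at hq
      have h0 : Xs n j p = ∅ := by simpa using hq.1.2.symm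
      apply hpe
      simp only [idx, mem_product, mem_powerset] at hp
      rw [Xs, Finset.union_eq_empty, Finset.sdiff_eq_empty_iff_subset,
        Finset.sdiff_eq_empty_iff_subset] at h0
      exact Prod.ext (Finset.Subset.antisymm hp.1 h0.1) (Finset.Subset.antisymm hp.2 h0.2)
    simp only [if_neg hx]

theorem reindex {n j u : ℕ} (hj1 : 2 ≤ j) (hj2 : j < n) (hu : u < j - 1) (F : ℕ → ℤ) :
    ∑ l ∈ Icc 1 (n - 2), zchoose ((n : ℤ) - j - 1) ((l : ℤ) - 1 - u) * F l =
    ∑ v ∈ range (n - j), ((n - j - 1).choose v : ℤ) * F (u + v + 1) := by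
  have e : ((n : ℤ) - j - 1).toNat = n - j - 1 := by omega
  symm
  apply Finset.sum_of_injOn (fun v => u + v + 1)
  · intro a _ b _ h
    simp only at h; omega
  · intro v hv
    simp only [coe_range, Set.mem_Iio] at hv
    simp only [coe_Icc, Set.mem_Icc]; omega
  · intro l hl hnot
    simp only [mem_Icc] at hl
    rw [zchoose]
    split_ifs with h
    · rw [e, Nat.choose_eq_zero_of_lt]
      · simp
      · by_contra hc
        apply hnot
        refine ⟨l - 1 - u, ?_, ?_⟩
        · simp only [coe_range, Set.mem_Iio]; omega
        · simp only; omega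
    · simp
  · intro v _
    have e2 : (((u + v + 1 : ℕ) : ℤ) - 1 - u) = v := by push_cast; ring
    rw [zchoose, e2, if_pos (by omega), e]
    simp

theorem Ecount_rec_aux (n d j : ℕ) (hj1 : 2 ≤ j) (hj2 : j < n) :
    (Ecount n d j : ℤ) = (∑ u ∈ range (j - 1), ((j - 2).choose u : ℤ) *
      ∑ v ∈ range (n - j), ((n - j - 1).choose v : ℤ) * ∑ k ∈ range (n + 1), hterm n d u v k) +
        ((eulerianFirst ((n : ℤ) - 2) ((d : ℤ) - 1) ((j : ℤ) - 1) : ℤ) -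
        (eulerianFirst ((n : ℤ) - 2) ((d : ℤ) - 2) ((j : ℤ) - 1) : ℤ)) := by
  rw [E_split hj1 hj2, W1_card hj1 hj2, W2_card hj1 hj2, PP_card, PP_card]
  push_cast
  rw [← Finset.sum_add_distrib, Finset.sum_congr rfl (fun p hp => XV_count hj1 hj2 hp),
    Finset.sum_add_distrib]
  congr 1
  · rw [idx, Finset.sum_product]
    have h1 : ∀ A : Finset ℕ, ∑ B ∈ (Ioo j n).powerset,
        ∑ k ∈ range (n + 1), hterm n d A.card B.card k =
        ∑ v ∈ range (n - j), ((n - j - 1).choose v : ℤ) *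
          ∑ k ∈ range (n + 1), hterm n d A.card v k := by
      intro A
      rw [Finset.sum_powerset_apply_card (fun v => ∑ k ∈ range (n + 1), hterm n d A.card v k)]
      rw [Nat.card_Ioo, show n - j - 1 + 1 = n - j by omega]
      simp only [nsmul_eq_mul]
    simp only [h1]
    rw [Finset.sum_powerset_apply_card (fun u => ∑ v ∈ range (n - j), ((n - j - 1).choose v : ℤ) *
          ∑ k ∈ range (n + 1), hterm n d u v k)]
    rw [Nat.card_Ioo, show j - 1 - 1 + 1 = j - 1 by omega]
    simp only [nsmul_eq_mul]
    rfl
  · rw [Finset.sum_ite_eq', if_pos]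
    simp [idx]

end Aux

/-- The recursion for `E(n,d,j)`; the sum over `k ≥ 0` has only finitely many nonzero
terms (all with `k ≤ d - 1 < n`), so it is taken over `k < n + 1`. -/
theorem Ecount_rec (n d j : ℕ) (hn : 3 ≤ n) (hj1 : 2 ≤ j) (hj2 : j ≤ n - 1)
    (hd : d ≤ n - 1) :
    (Ecount n d j : ℤ) =
      (∑ l ∈ Finset.Icc 1 (n - 2), ∑ k ∈ Finset.range (n + 1), ∑ u ∈ Finset.range (j - 1),
        ((j - 2).choose u : ℤ) * zchoose ((n : ℤ) - j - 1) ((l : ℤ) - 1 - u) *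
          (eulerian ((n : ℤ) - l - 2) ((d : ℤ) - k - 1) : ℤ) *
          ((eulerianFirst (l : ℤ) ((l : ℤ) - 1 - k) ((u : ℤ) + 1) : ℤ) +
            (eulerianFirst (l : ℤ) ((k : ℤ) - 1) ((u : ℤ) + 1) : ℤ))) +
        (eulerianFirst ((n : ℤ) - 2) ((d : ℤ) - 1) ((j : ℤ) - 1) : ℤ) -
        (eulerianFirst ((n : ℤ) - 2) ((d : ℤ) - 2) ((j : ℤ) - 1) : ℤ) := by
  have hj2' : j < n := by omega
  rw [Ecount_rec_aux n d j hj1 hj2', add_sub_assoc]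
  congr 1
  have hswap : ∀ l ∈ Finset.Icc 1 (n - 2),
      (∑ k ∈ Finset.range (n + 1), ∑ u ∈ Finset.range (j - 1),
        ((j - 2).choose u : ℤ) * zchoose ((n : ℤ) - j - 1) ((l : ℤ) - 1 - u) *
          (eulerian ((n : ℤ) - l - 2) ((d : ℤ) - k - 1) : ℤ) *
          ((eulerianFirst (l : ℤ) ((l : ℤ) - 1 - k) ((u : ℤ) + 1) : ℤ) +
            (eulerianFirst (l : ℤ) ((k : ℤ) - 1) ((u : ℤ) + 1) : ℤ))) =
      ∑ u ∈ Finset.range (j - 1), ((j - 2).choose u : ℤ) *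
        (zchoose ((n : ℤ) - j - 1) ((l : ℤ) - 1 - u) * ∑ k ∈ Finset.range (n + 1),
          (eulerian ((n : ℤ) - l - 2) ((d : ℤ) - k - 1) : ℤ) *
          ((eulerianFirst (l : ℤ) ((l : ℤ) - 1 - k) ((u : ℤ) + 1) : ℤ) +
            (eulerianFirst (l : ℤ) ((k : ℤ) - 1) ((u : ℤ) + 1) : ℤ))) := by
    intro l _
    rw [Finset.sum_comm]
    apply Finset.sum_congr rfl
    intro u _
    rw [Finset.mul_sum, Finset.mul_sum]
    apply Finset.sum_congr rfl
    intro k _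
    ring
  rw [Finset.sum_congr rfl hswap, Finset.sum_comm]
  apply Finset.sum_congr rfl
  intro u hu
  rw [← Finset.mul_sum]
  congr 1
  rw [Finset.mem_range] at hu
  rw [reindex hj1 hj2' hu (fun l => ∑ k ∈ Finset.range (n + 1),
          (eulerian ((n : ℤ) - l - 2) ((d : ℤ) - k - 1) : ℤ) *
          ((eulerianFirst (l : ℤ) ((l : ℤ) - 1 - k) ((u : ℤ) + 1) : ℤ) +
            (eulerianFirst (l : ℤ) ((k : ℤ) - 1) ((u : ℤ) + 1) : ℤ)))]
  apply Finset.sum_congr rfl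
  intro v _
  congr 1
end
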